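/- arXiv:math/0501113 — 3 statements merged into one kernel-verified Lean document; each statement's English description precedes it below -/
import Mathlib

section
/- Let Ω be a bounded open convex set in ℝ² containing the origin in its interior, satisfying sup_{θ∈S¹} sup_{δ>0} δ^{-1/2} μ(θ,δ) < ∞, and let 10 ≤ r ≤ R, R^{1/2} ≤ h ≤ R. Let 𝒜 = {x ∈ ℝ² : r − 1/h ≤ ρ*(x) < r + 1/h} be the annulus (the set difference of Ω*₊ = {ρ* < r + 1/h} and Ω*₋ = {ρ* < r − 1/h}), let 𝔸 = 𝒜 ∩ ℤ², and let E₁, …, E_M be the extreme points of the convex hull of 𝔸, arranged in counterclockwise order. Fix j and let S_j be the closed triangle with vertices E_j, E_{j+1} and the origin; let L_j = |E_j E_{j+1}|; let Θ_j be the total (positive) turning of the outward unit normal of ∂Ω* between the boundary points of Ω* lying on the rays from the origin through E_j and through E_{j+1} (this normal is unique at every boundary point since Ω, hence Ω*, is strictly convex under the curvature hypothesis). Let N_j⁻ (respectively N_j⁺) be the number of maximal line segments with endpoints in ℤ² that are contained in 𝒜 ∩ S_j and have E_j (respectively E_{j+1}) as an endpoint. Then there is a constant C, independent of j, r, R, h,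 such that N_j⁻ + N_j⁺ ≤ C (1 + area(𝒜 ∩ S_j) + L_j^{2/3} Θ_j^{1/3}). -/
/-!
The support function `ρ` of `Ω` is a gauge: sublinear and comparable with the Euclidean norm. The
two families of segments are treated alike, so let `A` be the common endpoint. With `a = r - 1/h`
and `b = r + 1/h`, a segment from `A` inside the annulus ends at a lattice point visible from `A`
in the complement of the convex set `{ρ < a}`. By maximality different segments have different
directions at `A`, so their other endpoints `P 0, P 1, …` can be listed in angular order around
`A` (`exists_sorted`, `card_segments_le`).

If the step from `P i` to `P (i + 1)` does not meet `{ρ < a}`, then the whole triangle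
`A, P i, P (i + 1)` lies in the annulus (`exists_cross`) and inside the triangle `0 A B`. Such
triangles do not overlap and have area at least `1/2`, being lattice triangles, so there are
`O(area)` such steps (`area_bound`).

If a step does meet `{ρ < a}`, visibility of its endpoints forces its direction to lie between the
tangent directions at `A` and at `B` (`edge_facts`), and any two such steps turn in the same sense
with their crossing points advancing along a fixed direction (`pair_facts`). Hence these steps,
apart from those near a step of the first kind or near an end of the list, have total length
`O(|AB|)` (`sum_increments_le`), their directions lie in a sector of angle `O(Θ)`, and, being
lattice vectors, any two of them span area at least `1`. A pigeonhole argument on slopes bounds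
their number by `O(|AB|^(2/3) Θ^(1/3))` (`card_cube_le`). The combination is `chain_bound`.
-/

open MeasureTheory Set
open scoped Pointwise RealInnerProductSpace NNReal ENNReal

noncomputable section

abbrev E2 := EuclideanSpace ℝ (Fin 2)

/-- The embedding of an integer vector into the Euclidean plane. -/
def ek (k : Fin 2 → ℤ) : E2 := (WithLp.equiv 2 (Fin 2 → ℝ)).symm fun i => (k i : ℝ)

/-- Number of lattice points in a set. -/
def latticeCount (S : Set E2) : ℕ := Nat.card {k : Fin 2 → ℤ | ek k ∈ S}

/-- The lattice rest `E_Ω(t) = card(tΩ ∩ ℤ²) − t²·area(Ω)`. -/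
def latticeRest (Ω : Set E2) (t : ℝ) : ℝ :=
  (latticeCount (t • Ω) : ℝ) - t ^ 2 * (volume Ω).toReal

/-- The mean square discrepancy `𝒢_Ω(R,h) = ((1/h)∫_R^{R+h} |E_Ω(t)|² dt)^{1/2}`. -/
def meanSquare (Ω : Set E2) (R h : ℝ) : ℝ :=
  Real.sqrt ((1 / h) * ∫ t in R..(R + h), (latticeRest Ω t) ^ 2)

/-- The support function `ρ*(ξ) = sup {⟨x,ξ⟩ : x ∈ Ω}`. -/
def suppFn (Ω : Set E2) (ξ : E2) : ℝ := sSup ((fun x => ⟪x, ξ⟫) '' Ω)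

/-- `μ(θ,δ)`, the diameter of the cap `𝒞(θ,δ) = {x ∈ ∂Ω : ⟨x,θ⟩ ≥ ρ*(θ) − δ}`. -/
def capDiam (Ω : Set E2) (θ : E2) (δ : ℝ) : ℝ :=
  Metric.diam {x ∈ frontier Ω | suppFn Ω θ - δ ≤ ⟪x, θ⟫}

/-- Curvature bounded below in the generalized sense:
`sup_{θ∈S¹} sup_{δ>0} δ^{-1/2} μ(θ,δ) < ∞`. -/
def CurvBddBelow (Ω : Set E2) : Prop :=
  ∃ K : ℝ, ∀ θ : E2, ‖θ‖ = 1 → ∀ δ : ℝ, 0 < δ → capDiam Ω θ δ ≤ K * Real.sqrt δ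

/-! ### Gauges, visibility and crossing steps -/

/-- The area form on the plane, with a sign `ε = ±1` recording the orientation, so that both ends
of an edge of the convex hull can be treated by the same argument. -/
def om (ε : ℝ) (x y : E2) : ℝ := ε * (x 0 * y 1 - x 1 * y 0)

/-- A norm-like (sublinear, not necessarily symmetric) function comparable with the Euclidean
norm. -/
structure IsGauge (ρ : E2 → ℝ) (m M : ℝ) : Prop where
  mpos : 0 < m
  Mpos : 0 < M
  sub : ∀ x y, ρ (x + y) ≤ ρ x + ρ y
  hom : ∀ t : ℝ, 0 ≤ t → ∀ x, ρ (t • x) = t * ρ x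
  lower : ∀ x, m * ‖x‖ ≤ ρ x
  upper : ∀ x, ρ x ≤ M * ‖x‖

/-- `P` is visible from `A` in the complement of the convex set `{ρ < a}`. -/
def Vis (ρ : E2 → ℝ) (a : ℝ) (A P : E2) : Prop :=
  ∀ s : ℝ, 0 ≤ s → s ≤ 1 → a ≤ ρ (A + s • (P - A))

/-- Membership in the triangle with vertices `0, A, B`. -/
def InTri (A B P : E2) : Prop :=
  ∃ s t : ℝ, 0 ≤ s ∧ 0 ≤ t ∧ s + t ≤ 1 ∧ P = s • A + t • B

lemma inner_eq (x y : E2) : ⟪x, y⟫ = x 0 * y 0 + x 1 * y 1 := by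
  simp [PiLp.inner_apply, Fin.sum_univ_two]; ring

lemma ext2 {x y : E2} (h0 : x 0 = y 0) (h1 : x 1 = y 1) : x = y := by
  ext i; fin_cases i <;> assumption

lemma IsGauge.nonneg {ρ : E2 → ℝ} {m M : ℝ} (G : IsGauge ρ m M) (x : E2) : 0 ≤ ρ x :=
  le_trans (mul_nonneg G.mpos.le (norm_nonneg _)) (G.lower x)

lemma IsGauge.comb {ρ : E2 → ℝ} {m M : ℝ} (G : IsGauge ρ m M) {s t : ℝ} (hs : 0 ≤ s)
    (ht : 0 ≤ t) (x y : E2) : ρ (s • x + t • y) ≤ s * ρ x + t * ρ y := by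
  have := G.sub (s • x) (t • y)
  rwa [G.hom s hs, G.hom t ht] at this

lemma IsGauge.zero {ρ : E2 → ℝ} {m M : ℝ} (G : IsGauge ρ m M) : ρ 0 = 0 := by
  have := G.hom 0 le_rfl 0
  simpa using this

/-- If `X` and `Y` lie in the convex set `{ρ < a}`, a point `P` visible from `A` whose direction
lies between those of `X` and `Y` must lie inside the triangle `A X Y`: otherwise the segment `AP`
would meet the chord `XY`. -/
lemma between {ρ : E2 → ℝ} {m M a ε : ℝ} (G : IsGauge ρ m M) {A P X Y : E2}
    (hv : Vis ρ a A P) (hX : ρ X < a) (hY : ρ Y < a)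
    (h1 : om ε (X - A) (P - A) ≤ 0) (h2 : om ε (P - A) (Y - A) ≤ 0)
    (h3 : om ε (X - A) (Y - A) < 0) :
    ∃ x y : ℝ, 0 ≤ x ∧ 0 ≤ y ∧ x + y < 1 ∧ P - A = x • (X - A) + y • (Y - A) := by
  set D := om ε (X - A) (Y - A) with hD
  have hD0 : D ≠ 0 := h3.ne
  obtain ⟨x, hx⟩ : ∃ x, x = om ε (P - A) (Y - A) / D := ⟨_, rfl⟩
  obtain ⟨y, hy⟩ : ∃ y, y = om ε (X - A) (P - A) / D := ⟨_, rfl⟩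
  have hx0 : 0 ≤ x := hx ▸ div_nonneg_of_nonpos h2 h3.le
  have hy0 : 0 ≤ y := hy ▸ div_nonneg_of_nonpos h1 h3.le
  have e : P - A = x • (X - A) + y • (Y - A) := by
    have hx' : x * D = om ε (P - A) (Y - A) := by rw [hx]; field_simp
    have hy' : y * D = om ε (X - A) (P - A) := by rw [hy]; field_simp
    simp only [om, PiLp.sub_apply] at hx' hy' hD
    apply ext2
    · apply mul_right_cancel₀ hD0
      simp only [PiLp.add_apply, PiLp.smul_apply, PiLp.sub_apply, smul_eq_mul]
      linear_combination (X 0 - A 0) * (-hx') + (Y 0 - A 0) * (-hy') + (P 0 - A 0) * hD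
    · apply mul_right_cancel₀ hD0
      simp only [PiLp.add_apply, PiLp.smul_apply, PiLp.sub_apply, smul_eq_mul]
      linear_combination (X 1 - A 1) * (-hx') + (Y 1 - A 1) * (-hy') + (P 1 - A 1) * hD
  refine ⟨x, y, hx0, hy0, ?_, e⟩
  by_contra hcon
  push Not at hcon
  have hz : 0 < x + y := by linarith
  have h := hv ((x + y)⁻¹) (by positivity) (inv_le_one_of_one_le₀ hcon)
  have e2 : A + (x + y)⁻¹ • (P - A) = (x / (x + y)) • X + (y / (x + y)) • Y := by
    rw [e]
    apply ext2 <;>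
    · simp only [PiLp.add_apply, PiLp.smul_apply, PiLp.sub_apply, smul_eq_mul]
      field_simp
      ring
  rw [e2] at h
  have h' := G.comb (s := x / (x + y)) (t := y / (x + y)) (by positivity) (by positivity) X Y
  have h4 : x / (x + y) * ρ X + y / (x + y) * ρ Y < a := by
    rw [div_mul_eq_mul_div, div_mul_eq_mul_div, ← add_div, div_lt_iff₀ hz]
    rcases hx0.lt_or_eq with hx1 | hx1
    · nlinarith [mul_lt_mul_of_pos_left hX hx1, mul_le_mul_of_nonneg_left hY.le hy0]
    · have hy1 : 0 < y := by linarith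
      nlinarith [mul_lt_mul_of_pos_left hY hy1, mul_le_mul_of_nonneg_left hX.le hx0]
  linarith

section geometry

variable {ρ : E2 → ℝ} {m M a ε : ℝ} {A B P Q : E2}

/-- In the triangle `0 A B`, a point coming strictly after another one in the angular order around
`A` is off the line `0A`. -/
lemma om_pos_of_later (hAB : 0 < om ε A B) (hP : InTri A B P) (hQ : InTri A B Q)
    (hord : om ε (P - A) (Q - A) < 0) : 0 < om ε A Q := by
  obtain ⟨s, t, hs, ht, hst, rfl⟩ := hP
  obtain ⟨s', t', hs', ht', hst', rfl⟩ := hQ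
  have e1 : om ε A (s' • A + t' • B) = t' * om ε A B := by
    simp only [om, PiLp.add_apply, PiLp.smul_apply, smul_eq_mul]; ring
  have e2 : om ε (s • A + t • B - A) (s' • A + t' • B - A)
      = (t * (1 - s') - t' * (1 - s)) * om ε A B := by
    simp only [om, PiLp.add_apply, PiLp.smul_apply, PiLp.sub_apply, smul_eq_mul]; ring
  rw [e1]
  rw [e2] at hord
  have : t * (1 - s') - t' * (1 - s) < 0 := by
    by_contra h; push Not at h
    linarith [mul_nonneg h hAB.le]
  have h1 : 0 ≤ t * (1 - s') := mul_nonneg ht (by linarith)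
  have h2 : 0 < t' := by
    rcases ht'.lt_or_eq with h | h
    · exact h
    · rw [← h] at this; linarith
  positivity

lemma om_left_nonneg (hAB : 0 < om ε A B) (hP : InTri A B P) : 0 ≤ om ε A P := by
  obtain ⟨s, t, hs, ht, hst, rfl⟩ := hP
  have e1 : om ε A (s • A + t • B) = t * om ε A B := by
    simp only [om, PiLp.add_apply, PiLp.smul_apply, smul_eq_mul]; ring
  rw [e1]; positivity

lemma om_right_nonneg (hAB : 0 < om ε A B) (hP : InTri A B P) : 0 ≤ om ε P B := by
  obtain ⟨s, t, hs, ht, hst, rfl⟩ := hP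
  have e1 : om ε (s • A + t • B) B = s * om ε A B := by
    simp only [om, PiLp.add_apply, PiLp.smul_apply, smul_eq_mul]; ring
  rw [e1]; positivity

lemma InTri.comb {s t : ℝ} (hP : InTri A B P) (hQ : InTri A B Q) (hs : 0 ≤ s) (ht : 0 ≤ t)
    (hst : s + t ≤ 1) : InTri A B (s • P + t • Q) := by
  obtain ⟨p, q, hp, hq, hpq, rfl⟩ := hP
  obtain ⟨p', q', hp', hq', hpq', rfl⟩ := hQ
  refine ⟨s * p + t * p', s * q + t * q', by positivity, by positivity, ?_, by module⟩
  nlinarith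

/-- If the triangle `A P Q`, with `P` and `Q` visible from `A`, meets `{ρ < a}`, then so does its
side `PQ`. The point found on `PQ` lies on the segment from the given point to the origin. -/
lemma exists_cross (G : IsGauge ρ m M) (ha : 0 < a) (hAB : 0 < om ε A B)
    (hP : InTri A B P) (hQ : InTri A B Q) (hvP : Vis ρ a A P)
    (hord : om ε (P - A) (Q - A) < 0) {s t : ℝ} (hs : 0 < s) (ht : 0 < t) (hst : s + t < 1)
    (hk : ρ (A + s • (P - A) + t • (Q - A)) < a) :
    ∃ l : ℝ, 0 < l ∧ l < 1 ∧ ρ (P + l • (Q - P)) < a := by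
  obtain ⟨k, hkdef⟩ : ∃ k, k = A + s • (P - A) + t • (Q - A) := ⟨_, rfl⟩
  rw [← hkdef] at hk
  have h1 : om ε (0 - A) (P - A) = - om ε A P := by
    simp only [om, PiLp.sub_apply, PiLp.zero_apply]; ring
  have h2 : om ε (P - A) (k - A) = t * om ε (P - A) (Q - A) := by
    subst hkdef
    simp only [om, PiLp.sub_apply, PiLp.add_apply, PiLp.smul_apply, smul_eq_mul]; ring
  have h3 : om ε (0 - A) (k - A) = - (s * om ε A P + t * om ε A Q) := by
    subst hkdef
    simp only [om, PiLp.sub_apply, PiLp.add_apply, PiLp.smul_apply, PiLp.zero_apply, smul_eq_mul]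
    ring
  have hAP := om_left_nonneg hAB hP
  have hAQ := om_pos_of_later hAB hP hQ hord
  obtain ⟨x, y, hx, hy, hxy, e⟩ := between (ε := ε) (X := 0) (Y := k) G hvP
    (by rw [G.zero]; exact ha) hk (by rw [h1]; linarith)
    (by rw [h2]; exact (mul_neg_of_pos_of_neg ht hord).le)
    (by rw [h3]; have := mul_pos ht hAQ; have := mul_nonneg hs.le hAP; linarith)
  have hD : 0 < 1 - (x + y) * (s + t) := by nlinarith
  obtain ⟨D, hDd⟩ : ∃ D, D = 1 - (x + y) * (s + t) := ⟨_, rfl⟩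
  rw [← hDd] at hD
  have hG : 0 < (1 - (x + y)) / D := div_pos (by linarith) hD
  have hV : 0 < (1 - (s + t)) / D := div_pos (by linarith) hD
  have hsum : (1 - (x + y)) / D * (s + t) + (1 - (s + t)) / D = 1 := by
    field_simp; rw [hDd]; ring
  refine ⟨(1 - (x + y)) / D * t, by positivity, by nlinarith [mul_pos hG hs], ?_⟩
  -- the crossing point is a multiple of `k` with factor in `[0, 1]`
  have key : P + ((1 - (x + y)) / D * t) • (Q - P) = (1 - x * (1 - (s + t)) / D) • k := by
    have e0 : P 0 - A 0 = x * (0 - A 0) + y * (k 0 - A 0) := by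
      have := congrArg (fun z : E2 => z 0) e
      simpa only [PiLp.sub_apply, PiLp.add_apply, PiLp.smul_apply, smul_eq_mul, PiLp.zero_apply] using this
    have e1 : P 1 - A 1 = x * (0 - A 1) + y * (k 1 - A 1) := by
      have := congrArg (fun z : E2 => z 1) e
      simpa only [PiLp.sub_apply, PiLp.add_apply, PiLp.smul_apply, smul_eq_mul, PiLp.zero_apply] using this
    have k0 : k 0 = A 0 + s * (P 0 - A 0) + t * (Q 0 - A 0) := by
      rw [hkdef]; simp only [PiLp.sub_apply, PiLp.add_apply, PiLp.smul_apply, smul_eq_mul]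
    have k1 : k 1 = A 1 + s * (P 1 - A 1) + t * (Q 1 - A 1) := by
      rw [hkdef]; simp only [PiLp.sub_apply, PiLp.add_apply, PiLp.smul_apply, smul_eq_mul]
    apply ext2
    · simp only [PiLp.sub_apply, PiLp.add_apply, PiLp.smul_apply, smul_eq_mul]
      field_simp
      rw [hDd]
      linear_combination (1 - (s + t)) * e0 - (1 - (x + y)) * k0
    · simp only [PiLp.sub_apply, PiLp.add_apply, PiLp.smul_apply, smul_eq_mul]
      field_simp
      rw [hDd]
      linear_combination (1 - (s + t)) * e1 - (1 - (x + y)) * k1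
  have hθ1 : x * (1 - (s + t)) / D ≤ 1 := by
    rw [div_le_one hD, hDd]; nlinarith [mul_nonneg hy (by linarith : (0:ℝ) ≤ 1 - (s + t))]
  have hθ0 : 0 ≤ x * (1 - (s + t)) / D := by
    apply div_nonneg (mul_nonneg hx (by linarith)) hD.le
  rw [key, G.hom _ (by linarith)]
  have := G.nonneg k
  nlinarith

/-- Facts on a step `PQ` (with `P` before `Q` in the angular order around `A`) crossing the convex
set `{ρ < a}` at `c`. Here `nA`, `nB` are supporting normals at `A` and `B`, in the scaled form
`⟪·, n⟫ ≤ κ ρ`. The last two conclusions say that the direction of the step lies in the sector of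
tangent directions determined by `nA` and `nB`. -/
lemma edge_facts (G : IsGauge ρ m M) (ha : 0 < a) (hAB : 0 < om ε A B)
    (hP : InTri A B P) (hQ : InTri A B Q) (hvP : Vis ρ a A P) (hvQ : Vis ρ a A Q)
    (hord : om ε (P - A) (Q - A) < 0) {l : ℝ} (hl0 : 0 < l) (hl1 : l < 1)
    (hc : ρ (P + l • (Q - P)) < a) {nA nB : E2} {κA κB : ℝ} (hκA : 0 < κA) (hκB : 0 < κB)
    (hA1 : ∀ x, ⟪x, nA⟫ ≤ κA * ρ x) (hA2 : ⟪A, nA⟫ = κA * ρ A)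
    (hB1 : ∀ x, ⟪x, nB⟫ ≤ κB * ρ x) (hB2 : ⟪B, nB⟫ = κB * ρ B) :
    0 < om ε A (Q - P) ∧ ⟪Q - P, nA⟫ ≤ 0 ∧ (0 ≤ ⟪A, nB⟫ → 0 ≤ ⟪Q - P, nB⟫) := by
  obtain ⟨c, hcd⟩ : ∃ c, c = P + l • (Q - P) := ⟨_, rfl⟩
  rw [← hcd] at hc
  have hcT : InTri A B c := by
    have := hP.comb hQ (s := 1 - l) (t := l) (by linarith) hl0.le (by linarith)
    rw [hcd]; convert this using 1; module
  have hAP := om_left_nonneg hAB hP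
  have hAQ := om_pos_of_later hAB hP hQ hord
  have h1 : om ε (0 - A) (P - A) = - om ε A P := by
    simp only [om, PiLp.sub_apply, PiLp.zero_apply]; ring
  have h2 : om ε (P - A) (c - A) = l * om ε (P - A) (Q - A) := by
    subst hcd
    simp only [om, PiLp.sub_apply, PiLp.add_apply, PiLp.smul_apply, smul_eq_mul]; ring
  have h3 : om ε (0 - A) (c - A) = - om ε A c := by
    simp only [om, PiLp.sub_apply, PiLp.zero_apply]; ring
  have h4 : om ε A c = (1 - l) * om ε A P + l * om ε A Q := by
    subst hcd
    simp only [om, PiLp.sub_apply, PiLp.add_apply, PiLp.smul_apply, smul_eq_mul]; ring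
  have hAc : 0 < om ε A c := by
    rw [h4]
    have := mul_pos hl0 hAQ
    have := mul_nonneg (by linarith : (0:ℝ) ≤ 1 - l) hAP
    linarith
  obtain ⟨x, y, hx, hy, hxy, e⟩ := between (ε := ε) (X := 0) (Y := c) G hvP
    (by rw [G.zero]; exact ha) hc (by rw [h1]; linarith)
    (by rw [h2]; exact (mul_neg_of_pos_of_neg hl0 hord).le) (by rw [h3]; linarith)
  have eP : P = (1 - x - y) • A + y • c := by
    have : P = A + (x • (0 - A) + y • (c - A)) := by rw [← e]; module
    rw [this]; module
  have hw : c - P = l • (Q - P) := by rw [hcd]; module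
  have hρP : a ≤ ρ P := by simpa using hvP 1 zero_le_one le_rfl
  have hρQ : a ≤ ρ Q := by simpa using hvQ 1 zero_le_one le_rfl
  have hAw : 0 < om ε A (Q - P) := by
    have i1 : l * om ε A (Q - P) = om ε A (c - P) := by
      rw [hw]; simp only [om, PiLp.smul_apply, smul_eq_mul]; ring
    have i2 : om ε A (c - P) = (1 - y) * om ε A c := by
      rw [eP]; simp only [om, PiLp.sub_apply, PiLp.add_apply, PiLp.smul_apply, smul_eq_mul]; ring
    have : 0 < l * om ε A (Q - P) := by
      rw [i1, i2]; exact mul_pos (by linarith) hAc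
    exact (pos_iff_pos_of_mul_pos this).1 hl0
  refine ⟨hAw, ?_, ?_⟩
  · have i1 : l * ⟪Q - P, nA⟫ = ⟪c, nA⟫ - ⟪P, nA⟫ := by
      rw [← inner_sub_left, hw, inner_smul_left]; simp
    have i2 : ⟪P, nA⟫ = (1 - x - y) * ⟪A, nA⟫ + y * ⟪c, nA⟫ := by
      rw [eP, inner_add_left, inner_smul_left, inner_smul_left]; simp
    have i3 := G.comb (s := 1 - x - y) (t := y) (by linarith) hy A c
    rw [← eP] at i3
    have i4 : (1 - y) * a ≤ (1 - x - y) * ρ A := by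
      have := mul_le_mul_of_nonneg_left hc.le hy
      linarith
    have i5 : ⟪c, nA⟫ ≤ κA * a := (hA1 c).trans (mul_le_mul_of_nonneg_left hc.le hκA.le)
    have i6 : l * ⟪Q - P, nA⟫ ≤ 0 := by
      rw [i1, i2, hA2]
      have := mul_le_mul_of_nonneg_left i4 hκA.le
      have := mul_le_mul_of_nonneg_left i5 (by linarith : 0 ≤ 1 - y)
      linarith
    exact nonpos_of_mul_nonpos_right i6 hl0
  · intro hAB'
    have hcQ : 0 < om ε c Q := by
      -- `Q` lies radially after `c`
      have i1 : l * om ε c Q = (1 - l) * ((1 - x - y) * om ε A c) := by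
        have q0 : l * (Q 0 - P 0) = c 0 - P 0 := by rw [hcd]; simp
        have q1 : l * (Q 1 - P 1) = c 1 - P 1 := by rw [hcd]; simp
        have p0 : P 0 = (1 - x - y) * A 0 + y * c 0 := by
          conv_lhs => rw [eP]
          simp
        have p1 : P 1 = (1 - x - y) * A 1 + y * c 1 := by
          conv_lhs => rw [eP]
          simp
        simp only [om]
        linear_combination ε * (c 0 * q1 - c 1 * q0) + ε * (l - 1) * (c 0 * p1 - c 1 * p0)
      have : 0 < l * om ε c Q := by
        rw [i1]
        exact mul_pos (by linarith) (mul_pos (by linarith) hAc)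
      exact (pos_iff_pos_of_mul_pos this).1 hl0
    have hQB := om_right_nonneg hAB hQ
    obtain ⟨s, t, hs, ht, hst, ec⟩ := hcT
    have hcB : 0 < om ε c B := by
      have i1 : om ε c B = s * om ε A B := by
        rw [ec]; simp only [om, PiLp.add_apply, PiLp.smul_apply, smul_eq_mul]; ring
      rw [i1]
      rcases hs.lt_or_eq with h | h
      · positivity
      · exfalso
        have : om ε c Q = - (t * om ε Q B) := by
          rw [ec, ← h]; simp only [om, PiLp.add_apply, PiLp.smul_apply, smul_eq_mul]; ring
        rw [this] at hcQ
        have := mul_nonneg ht hQB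
        linarith
    obtain ⟨α, hα⟩ : ∃ α, α = om ε Q B / om ε c B := ⟨_, rfl⟩
    obtain ⟨β, hβ⟩ : ∃ β, β = om ε c Q / om ε c B := ⟨_, rfl⟩
    have hα0 : 0 ≤ α := hα ▸ div_nonneg hQB hcB.le
    have hβ0 : 0 ≤ β := hβ ▸ div_nonneg hcQ.le hcB.le
    have eQ : Q = α • c + β • B := by
      have a1 : α * om ε c B = om ε Q B := by rw [hα]; field_simp
      have b1 : β * om ε c B = om ε c Q := by rw [hβ]; field_simp
      have hne := hcB.ne'
      simp only [om] at a1 b1 hne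
      apply ext2
      · apply mul_right_cancel₀ hne
        simp only [PiLp.add_apply, PiLp.smul_apply, smul_eq_mul]
        linear_combination (c 0) * (-a1) + (B 0) * (-b1)
      · apply mul_right_cancel₀ hne
        simp only [PiLp.add_apply, PiLp.smul_apply, smul_eq_mul]
        linear_combination (c 1) * (-a1) + (B 1) * (-b1)
    have i3 := G.comb hα0 hβ0 c B
    rw [← eQ] at i3
    have i2 : ⟪Q, nB⟫ = α * ⟪c, nB⟫ + β * ⟪B, nB⟫ := by
      rw [eQ, inner_add_left, inner_smul_left, inner_smul_left]; simp
    have hQc : Q - c = (1 - l) • (Q - P) := by rw [hcd]; module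
    have i1 : (1 - l) * ⟪Q - P, nB⟫ = ⟪Q, nB⟫ - ⟪c, nB⟫ := by
      rw [← inner_sub_left, hQc, inner_smul_left]; simp
    have hρB := G.nonneg B
    have i4 : 0 ≤ ⟪c, nB⟫ := by
      rw [ec, inner_add_left, inner_smul_left, inner_smul_left, hB2]
      simp only [RCLike.conj_to_real]
      positivity
    have i5 : ⟪c, nB⟫ ≤ κB * a := (hB1 c).trans (mul_le_mul_of_nonneg_left hc.le hκB.le)
    have i6 : 0 ≤ (1 - l) * ⟪Q - P, nB⟫ := by
      rw [i1, i2, hB2]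
      rcases le_total 1 α with h | h
      · have : 0 ≤ β * (κB * ρ B) := by positivity
        have := mul_nonneg (by linarith : 0 ≤ α - 1) i4
        linarith
      · have j1 : (1 - α) * a ≤ β * ρ B := by
          have := mul_le_mul_of_nonneg_left hc.le hα0
          linarith
        have := mul_le_mul_of_nonneg_left j1 hκB.le
        have := mul_le_mul_of_nonneg_left i5 (by linarith : 0 ≤ 1 - α)
        linarith
    exact nonneg_of_mul_nonneg_right i6 (by linarith)

/-- Two crossing steps `PQ`, `P'Q'`, in angular order around `A`, with crossing points `c`, `c'`:
the steps turn in the positive direction, and the chord `c' - c` points into every half-plane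
containing both steps. -/
lemma pair_facts (G : IsGauge ρ m M) {P' Q' c c' : E2} {l l' : ℝ}
    (hvQ : Vis ρ a A Q) (hvP' : Vis ρ a A P')
    (hl1 : l < 1) (hl0' : 0 < l')
    (hcd : c = P + l • (Q - P)) (hcd' : c' = P' + l' • (Q' - P'))
    (hc : ρ c < a) (hc' : ρ c' < a) (hAc : 0 ≤ om ε A c)
    (hw : 0 < om ε A (Q - P)) (hw' : 0 < om ε A (Q' - P'))
    (h1 : om ε (c - A) (c' - A) < 0) (h2 : om ε (c - A) (Q - A) ≤ 0)
    (h3 : om ε (Q - A) (c' - A) ≤ 0) (h4 : om ε (c - A) (P' - A) ≤ 0)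
    (h5 : om ε (P' - A) (c' - A) ≤ 0) :
    0 < om ε (Q - P) (Q' - P') ∧
      ∀ u : E2, 0 < ⟪Q - P, u⟫ → 0 < ⟪Q' - P', u⟫ → 0 < ⟪c' - c, u⟫ := by
  obtain ⟨x, y, hx, hy, hxy, e⟩ := between G hvQ hc hc' h2 h3 h1
  obtain ⟨x', y', hx', hy', hxy', e'⟩ := between G hvP' hc hc' h4 h5 h1
  obtain ⟨w, hwd⟩ : ∃ w, w = Q - P := ⟨_, rfl⟩
  obtain ⟨w', hwd'⟩ : ∃ w', w' = Q' - P' := ⟨_, rfl⟩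
  obtain ⟨d, hd⟩ : ∃ d, d = c' - c := ⟨_, rfl⟩
  rw [← hwd] at hw
  rw [← hwd'] at hw'
  rw [← hwd, ← hwd', ← hd]
  have f1 : (1 - l) • w = y • d - (1 - x - y) • (c - A) := by
    have : (1 - l) • w = (Q - A) - (c - A) := by rw [hcd, hwd]; module
    rw [this, e, hd]; module
  have f2 : l' • w' = x' • d + (1 - x' - y') • (c' - A) := by
    have : l' • w' = (c' - A) - (P' - A) := by rw [hcd', hwd']; module
    rw [this, e', hd]; module
  have g1 : 0 < om ε w d := by
    have i : (1 - l) * om ε w d = - ((1 - x - y) * om ε (c - A) (c' - A)) := by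
      have : (1 - l) * om ε w d = om ε ((1 - l) • w) d := by
        simp only [om, PiLp.smul_apply, smul_eq_mul]; ring
      rw [this, f1, hd]
      simp only [om, PiLp.sub_apply, PiLp.smul_apply, smul_eq_mul]; ring
    have : 0 < (1 - l) * om ε w d := by
      rw [i]; have := mul_neg_of_pos_of_neg (by linarith : 0 < 1 - x - y) h1; linarith
    exact (pos_iff_pos_of_mul_pos this).1 (by linarith)
  have g2 : 0 < om ε d w' := by
    have i : l' * om ε d w' = - ((1 - x' - y') * om ε (c - A) (c' - A)) := by
      have : l' * om ε d w' = om ε d (l' • w') := by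
        simp only [om, PiLp.smul_apply, smul_eq_mul]; ring
      rw [this, f2, hd]
      simp only [om, PiLp.sub_apply, PiLp.add_apply, PiLp.smul_apply, smul_eq_mul]; ring
    have : 0 < l' * om ε d w' := by
      rw [i]; have := mul_neg_of_pos_of_neg (by linarith : 0 < 1 - x' - y') h1; linarith
    exact (pos_iff_pos_of_mul_pos this).1 hl0'
  have g3 : 0 < om ε A d := by
    have i : (1 - l) * om ε A w = y * om ε A d - (1 - x - y) * om ε A c := by
      have : (1 - l) * om ε A w = om ε A ((1 - l) • w) := by
        simp only [om, PiLp.smul_apply, smul_eq_mul]; ring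
      rw [this, f1]
      simp only [om, PiLp.sub_apply, PiLp.smul_apply, smul_eq_mul]; ring
    have j1 : 0 < (1 - l) * om ε A w := mul_pos (by linarith) hw
    have j2 : 0 ≤ (1 - x - y) * om ε A c := mul_nonneg (by linarith) hAc
    have j3 : 0 < y * om ε A d := by linarith
    exact pos_of_mul_pos_right j3 hy
  have g4 : 0 < om ε w w' := by
    -- Plücker relation between `A, w, d, w'`
    have i : om ε A d * om ε w w' = om ε A w' * om ε w d + om ε A w * om ε d w' := by
      simp only [om]; ring
    have : 0 < om ε A d * om ε w w' := by rw [i]; positivity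
    exact (pos_iff_pos_of_mul_pos this).1 g3
  refine ⟨g4, fun u h h' => ?_⟩
  have i : ⟪d, u⟫ * om ε w w' = ⟪w', u⟫ * om ε w d + ⟪w, u⟫ * om ε d w' := by
    simp only [om, inner_eq]; ring
  have : 0 < ⟪d, u⟫ * om ε w w' := by rw [i]; positivity
  exact (pos_iff_pos_of_mul_pos this).2 g4

end geometry

/-! ### Counting vectors with separated slopes -/

/-- All crossing steps point into a common half-plane, with a uniform margin: if `w` lies in the
cone spanned by the tangent direction at `A` and by `-A`, then the sum `u` of the corresponding
unit vectors satisfies `‖w‖ ≤ C ⟪w, u⟫`. -/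
lemma exists_frame {ε κ : ℝ} (hε : ε ^ 2 = 1) {A n : E2} (hA : A ≠ 0) (hn : ‖n‖ = 1)
    (hκ : 0 < κ) (hAn : κ * ‖A‖ ≤ ⟪A, n⟫) :
    ∃ u : E2, ‖u‖ ≤ 2 ∧ ∀ w : E2, 0 ≤ om ε A w → ⟪w, n⟫ ≤ 0 → κ ^ 2 / 2 * ‖w‖ ≤ ⟪w, u⟫ := by
  have hA0 : 0 < ‖A‖ := norm_pos_iff.2 hA
  obtain ⟨e, he⟩ : ∃ e : E2, e = ‖A‖⁻¹ • A := ⟨_, rfl⟩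
  have hen : ‖e‖ = 1 := by rw [he, norm_smul]; simp [hA0.ne']
  have hAe : A = ‖A‖ • e := by rw [he, smul_smul, mul_inv_cancel₀ hA0.ne', one_smul]
  have hc : κ ≤ ⟪e, n⟫ := by
    rw [he, inner_smul_left]; simp only [conj_trivial]
    rw [← div_eq_inv_mul, le_div_iff₀ hA0]; exact hAn
  obtain ⟨τ, hτ⟩ : ∃ τ : E2, τ = !₂[-(ε * n 1), ε * n 0] := ⟨_, rfl⟩
  have hτ0 : τ 0 = -(ε * n 1) := by rw [hτ]; simp
  have hτ1 : τ 1 = ε * n 0 := by rw [hτ]; simp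
  have hn2 : n 0 * n 0 + n 1 * n 1 = 1 := by
    rw [← inner_eq, real_inner_self_eq_norm_sq, hn]; norm_num
  have he2 : e 0 * e 0 + e 1 * e 1 = 1 := by
    rw [← inner_eq, real_inner_self_eq_norm_sq, hen]; norm_num
  have hτn : ‖τ‖ = 1 := by
    have : ‖τ‖ ^ 2 = 1 := by
      rw [← real_inner_self_eq_norm_sq, inner_eq, hτ0, hτ1]
      linear_combination ε ^ 2 * hn2 + hε
    nlinarith [norm_nonneg τ]
  have hpos : 0 < ⟪e, n⟫ := by linarith
  have hτe : ⟪τ, e⟫ ^ 2 + ⟪e, n⟫ ^ 2 = 1 := by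
    rw [inner_eq, inner_eq, hτ0, hτ1]
    linear_combination (e 1 * n 0 - e 0 * n 1) ^ 2 * hε + (e 0 * e 0 + e 1 * e 1) * hn2 + he2
  have hmarg : κ ^ 2 / 2 ≤ 1 - ⟪τ, e⟫ := by
    nlinarith [sq_nonneg (⟪τ, e⟫ - 1), mul_le_mul hc hc hκ.le hpos.le]
  refine ⟨τ - e, ?_, fun w h1 h2 => ?_⟩
  · calc ‖τ - e‖ ≤ ‖τ‖ + ‖e‖ := norm_sub_le _ _
      _ = 2 := by rw [hτn, hen]; norm_num
  obtain ⟨p, hp⟩ : ∃ p, p = om ε e w / ⟪e, n⟫ := ⟨_, rfl⟩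
  obtain ⟨q, hq⟩ : ∃ q, q = -⟪w, n⟫ / ⟪e, n⟫ := ⟨_, rfl⟩
  have hom : 0 ≤ om ε e w := by
    have : om ε e w = ‖A‖⁻¹ * om ε A w := by
      rw [he]; simp only [om, PiLp.smul_apply, smul_eq_mul]; ring
    rw [this]; positivity
  have hp0 : 0 ≤ p := by rw [hp]; positivity
  have hq0 : 0 ≤ q := by rw [hq]; exact div_nonneg (by linarith) hpos.le
  have hw : w = p • τ - q • e := by
    have p1 : p * ⟪e, n⟫ = om ε e w := by rw [hp]; field_simp
    have q1 : q * ⟪e, n⟫ = -⟪w, n⟫ := by rw [hq]; field_simp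
    have hne := hpos.ne'
    simp only [om, inner_eq] at p1 q1 hne
    apply ext2
    · apply mul_right_cancel₀ hne
      simp only [PiLp.sub_apply, PiLp.smul_apply, smul_eq_mul, hτ0]
      linear_combination (e 0) * q1 + ε * n 1 * p1 + (e 0 * w 1 - e 1 * w 0) * n 1 * hε
    · apply mul_right_cancel₀ hne
      simp only [PiLp.sub_apply, PiLp.smul_apply, smul_eq_mul, hτ1]
      linear_combination (e 1) * q1 - ε * n 0 * p1 - (e 0 * w 1 - e 1 * w 0) * n 0 * hε
  have hwn : ‖w‖ ≤ p + q := by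
    rw [hw]
    calc _ ≤ ‖p • τ‖ + ‖q • e‖ := norm_sub_le _ _
      _ = p + q := by rw [norm_smul, norm_smul, hτn, hen]; simp [abs_of_nonneg, hp0, hq0]
  have hin : ⟪w, τ - e⟫ = (p + q) * (1 - ⟪τ, e⟫) := by
    have a1 : ⟪τ, τ⟫ = 1 := by rw [real_inner_self_eq_norm_sq, hτn]; norm_num
    have a2 : ⟪e, e⟫ = 1 := by rw [real_inner_self_eq_norm_sq, hen]; norm_num
    rw [hw, inner_sub_left, inner_sub_right, inner_sub_right]
    simp only [inner_smul_left, conj_trivial, a1, a2, real_inner_comm τ e]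
    ring
  rw [hin]
  calc κ ^ 2 / 2 * ‖w‖ ≤ κ ^ 2 / 2 * (p + q) := by gcongr
    _ ≤ (1 - ⟪τ, e⟫) * (p + q) := by gcongr
    _ = _ := by ring

lemma card_le_of_separated {T δ : ℝ} (hδ : 0 < δ) (hT : 0 ≤ T) (F : Finset ℕ) (s : ℕ → ℝ)
    (hsep : ∀ i ∈ F, ∀ j ∈ F, i < j → δ ≤ s j - s i)
    (hT' : ∀ i ∈ F, ∀ j ∈ F, i < j → s j - s i ≤ T) : (F.card : ℝ) ≤ T / δ + 1 := by
  rcases F.eq_empty_or_nonempty with rfl | hF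
  · simp; positivity
  obtain ⟨k, hk, hmin⟩ : ∃ k ∈ F, ∀ j ∈ F, k ≤ j := 
    ⟨F.min' hF, F.min'_mem hF, fun j hj => F.min'_le j hj⟩
  have h0 : ∀ j ∈ F, 0 ≤ s j - s k ∧ s j - s k ≤ T := by
    intro j hj
    rcases (hmin j hj).lt_or_eq with h | h
    · exact ⟨hδ.le.trans (hsep k hk j hj h), hT' k hk j hj h⟩
    · subst h; simp [hT]
  have hcard : F.card ≤ (Finset.range (⌊T / δ⌋₊ + 1)).card := by
    apply Finset.card_le_card_of_injOn (fun j => ⌊(s j - s k) / δ⌋₊)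
    · intro j hj
      simp only [Finset.coe_range, Set.mem_Iio, Nat.lt_succ_iff]
      exact Nat.floor_le_floor (div_le_div_of_nonneg_right (h0 j hj).2 hδ.le)
    · have key : ∀ i ∈ F, ∀ j ∈ F, i < j → ⌊(s i - s k) / δ⌋₊ ≠ ⌊(s j - s k) / δ⌋₊ := by
        intro i hi j hj hij h
        have h1 := hsep i hi j hj hij
        have h2 : (s i - s k) / δ + 1 ≤ (s j - s k) / δ := by
          rw [div_add_one hδ.ne', div_le_div_iff_of_pos_right hδ]; linarith
        have h3 : ⌊(s i - s k) / δ⌋₊ + 1 ≤ ⌊(s j - s k) / δ⌋₊ := by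
          rw [← Nat.floor_add_one (div_nonneg (h0 i hi).1 hδ.le)]
          exact Nat.floor_le_floor h2
        omega
      intro i hi j hj h
      rcases lt_trichotomy i j with hij | hij | hij
      · exact absurd h (key i hi j hj hij)
      · exact hij
      · exact absurd h.symm (key j hj i hi hij)
  rw [Finset.card_range] at hcard
  calc (F.card : ℝ) ≤ ((⌊T / δ⌋₊ + 1 : ℕ) : ℝ) := by exact_mod_cast hcard
    _ = (⌊T / δ⌋₊ : ℝ) + 1 := by push_cast; ring
    _ ≤ T / δ + 1 := by gcongr; exact Nat.floor_le (by positivity)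

/-- If vectors of lengths `ℓ i` and slopes `s i` span pairwise areas at least one, with total
length at most `Λ` and slopes in a range of length `T`, then their number is `O(Λ^{2/3} T^{1/3})`:
at least half of them have length at most twice the average. -/
lemma card_cube_le {Λ T : ℝ} (hT : 0 ≤ T) (F : Finset ℕ) (s ℓ : ℕ → ℝ)
    (hℓ : ∀ i ∈ F, 0 < ℓ i) (hsum : ∑ i ∈ F, ℓ i ≤ Λ)
    (hsep : ∀ i ∈ F, ∀ j ∈ F, i < j → 1 ≤ (s j - s i) * (ℓ i * ℓ j))
    (hT' : ∀ i ∈ F, ∀ j ∈ F, i < j → s j - s i ≤ T) :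
    (F.card : ℝ) ≤ 4 ∨ (F.card : ℝ) ^ 3 ≤ 16 * Λ ^ 2 * T := by
  by_contra hcon
  push Not at hcon
  obtain ⟨h4, h16⟩ := hcon
  set n : ℝ := (F.card : ℝ) with hn
  have hnpos : 0 < n := by linarith
  have hΛ : 0 < Λ := by
    have hne : F.Nonempty := by
      rw [← Finset.card_pos]; rw [hn] at hnpos; exact_mod_cast hnpos
    exact lt_of_lt_of_le (Finset.sum_pos hℓ hne) hsum
  set lam := 2 * Λ / n with hlam
  have hlampos : 0 < lam := by positivity
  set F1 := F.filter (fun i => ℓ i ≤ lam) with hF1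
  set F2 := F.filter (fun i => ¬ ℓ i ≤ lam) with hF2
  have hcards : (F1.card : ℝ) + F2.card = n := by
    rw [hn]; exact_mod_cast Finset.card_filter_add_card_filter_not (s := F) (fun i => ℓ i ≤ lam)
  have hF2card : (F2.card : ℝ) * lam ≤ Λ := by
    calc (F2.card : ℝ) * lam = ∑ i ∈ F2, lam := by simp
      _ ≤ ∑ i ∈ F2, ℓ i := Finset.sum_le_sum fun i hi => (not_le.1 (Finset.mem_filter.1 hi).2).le
      _ ≤ ∑ i ∈ F, ℓ i := Finset.sum_le_sum_of_subset_of_nonneg (Finset.filter_subset _ _)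
          fun i hi _ => (hℓ i hi).le
      _ ≤ Λ := hsum
  have hF2' : (F2.card : ℝ) ≤ n / 2 := by
    rw [hlam, mul_div_assoc', div_le_iff₀ hnpos] at hF2card
    nlinarith
  have hsub : ∀ i ∈ F1, i ∈ F ∧ ℓ i ≤ lam := fun i hi => Finset.mem_filter.1 hi
  have hF1' := card_le_of_separated (δ := 1 / lam ^ 2) (T := T) (by positivity) hT F1 s
    (fun i hi j hj hij => by
      have h1 := hsep i (hsub i hi).1 j (hsub j hj).1 hij
      have hi0 := hℓ i (hsub i hi).1
      have hj0 := hℓ j (hsub j hj).1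
      have hprod : ℓ i * ℓ j ≤ lam ^ 2 := by
        rw [sq]; exact mul_le_mul (hsub i hi).2 (hsub j hj).2 hj0.le hlampos.le
      have hs : 0 ≤ s j - s i := by
        by_contra hneg; push Not at hneg
        have := mul_neg_of_neg_of_pos hneg (mul_pos hi0 hj0)
        linarith
      rw [div_le_iff₀ (by positivity)]
      exact h1.trans (mul_le_mul_of_nonneg_left hprod hs))
    (fun i hi j hj hij => hT' i (hsub i hi).1 j (hsub j hj).1 hij)
  have h5 : n / 2 ≤ T * lam ^ 2 + 1 := by
    have : T / (1 / lam ^ 2) = T * lam ^ 2 := by field_simp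
    rw [this] at hF1'
    linarith
  have h6 : n / 4 ≤ T * lam ^ 2 := by linarith
  have h7 : lam * n = 2 * Λ := by rw [hlam]; field_simp
  have h8 : n ^ 3 ≤ 4 * T * (lam * n) ^ 2 := by nlinarith [mul_le_mul_of_nonneg_right h6 (sq_nonneg n)]
  rw [h7] at h8
  nlinarith

/-- Overlapping increments of a bounded monotone quantity, known on a subset `F` of the indices
only. -/
lemma sum_increments_le (F E : Finset ℕ) (f : ℕ → ℝ) (D : ℝ) (hD : ∀ i ∈ E, |f i| ≤ D)
    (hmono : ∀ i ∈ E, ∀ j ∈ E, i < j → f i ≤ f j)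
    (hF : ∀ i ∈ F, i ∈ E ∧ i + 2 ∈ E) : ∑ i ∈ F, (f (i + 2) - f i) ≤ 4 * |D| := by
  have hm : MonotoneOn f (E : Set ℕ) := by
    intro i hi j hj hij
    rcases hij.lt_or_eq with h | h
    · exact hmono i hi j hj h
    · rw [h]
  obtain ⟨g, hg, hgf⟩ := hm.exists_monotone_extension
    ⟨-D, by rintro _ ⟨i, hi, rfl⟩; exact (abs_le.1 (hD i hi)).1⟩
    ⟨D, by rintro _ ⟨i, hi, rfl⟩; exact (abs_le.1 (hD i hi)).2⟩
  obtain ⟨k, hk⟩ : ∃ k : ℕ → ℝ, k = fun i => max (-|D|) (min |D| (g i)) := ⟨_, rfl⟩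
  have hkm : Monotone k := by
    intro i j hij; rw [hk]; exact max_le_max le_rfl (min_le_min le_rfl (hg hij))
  have hkE : ∀ i ∈ E, k i = f i := by
    intro i hi
    have h1 := abs_le.1 ((hD i hi).trans (le_abs_self D))
    rw [hk]; simp only
    rw [← hgf hi, min_eq_right h1.2, max_eq_right h1.1]
  have hkb : ∀ i, -|D| ≤ k i ∧ k i ≤ |D| := by
    intro i; rw [hk]
    exact ⟨le_max_left _ _, max_le (by linarith [abs_nonneg D]) (min_le_left _ _)⟩
  obtain ⟨N, hN⟩ : ∃ N, F ⊆ Finset.range N := ⟨_, Finset.subset_range_sup_succ F⟩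
  have htel : ∀ N, ∑ i ∈ Finset.range N, (k (i + 2) - k i) = k (N + 1) + k N - k 1 - k 0 := by
    intro N
    induction N with
    | zero => simp
    | succ n ih => rw [Finset.sum_range_succ, ih]; ring
  calc ∑ i ∈ F, (f (i + 2) - f i) = ∑ i ∈ F, (k (i + 2) - k i) := by
        apply Finset.sum_congr rfl; intro i hi; rw [hkE _ (hF i hi).1, hkE _ (hF i hi).2]
    _ ≤ ∑ i ∈ Finset.range N, (k (i + 2) - k i) :=
        Finset.sum_le_sum_of_subset_of_nonneg hN fun i _ _ => sub_nonneg.2 (hkm (by omega))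
    _ = k (N + 1) + k N - k 1 - k 0 := htel N
    _ ≤ 4 * |D| := by linarith [hkb (N + 1), hkb N, hkb 1, hkb 0]

/-! ### Areas and lattice vectors -/

lemma volume_square : volume {x : E2 | ∀ i, x i ∈ Icc (1 / 8 : ℝ) (3 / 8)} =
    ENNReal.ofReal (1 / 16) := by
  have h := (PiLp.volume_preserving_ofLp (Fin 2)).measure_preimage
    (s := Set.pi univ fun _ : Fin 2 => Icc (1 / 8 : ℝ) (3 / 8))
    (MeasurableSet.univ_pi fun _ => measurableSet_Icc).nullMeasurableSet
  have e : {x : E2 | ∀ i, x i ∈ Icc (1 / 8 : ℝ) (3 / 8)} =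
      (@WithLp.ofLp 2 (Fin 2 → ℝ)) ⁻¹' (Set.pi univ fun _ : Fin 2 => Icc (1 / 8 : ℝ) (3 / 8)) := by
    ext x; simp only [Set.mem_ofPred_eq, Set.mem_preimage, Set.mem_univ_pi]
  rw [e, h, volume_pi_pi]
  simp only [Real.volume_Icc, Finset.prod_const, Finset.card_univ, Fintype.card_fin]
  rw [← ENNReal.ofReal_pow (by norm_num)]; norm_num

/-- A closed parallelogram inside the open triangle `A, A + v, A + w`. -/
def para (A v w : E2) : Set E2 :=
  {q | ∃ s t : ℝ, s ∈ Icc (1 / 8 : ℝ) (3 / 8) ∧ t ∈ Icc (1 / 8 : ℝ) (3 / 8) ∧ q = A + s • v + t • w}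

lemma para_measurable (A v w : E2) : MeasurableSet (para A v w) := by
  have : para A v w = (fun p : ℝ × ℝ => A + p.1 • v + p.2 • w) ''
      (Icc (1 / 8 : ℝ) (3 / 8) ×ˢ Icc (1 / 8 : ℝ) (3 / 8)) := by
    ext q; constructor
    · rintro ⟨s, t, hs, ht, rfl⟩; exact ⟨(s, t), ⟨hs, ht⟩, rfl⟩
    · rintro ⟨⟨s, t⟩, ⟨hs, ht⟩, rfl⟩; exact ⟨s, t, hs, ht, rfl⟩
  rw [this]
  exact ((isCompact_Icc.prod isCompact_Icc).image (by fun_prop)).measurableSet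

lemma volume_para {ε : ℝ} (hε : ε ^ 2 = 1) (A v w : E2) :
    volume (para A v w) = ENNReal.ofReal (|om ε v w| / 16) := by
  obtain ⟨f, hf⟩ : ∃ f : E2 →ₗ[ℝ] E2, f = Matrix.toLpLin 2 2 !![v 0, w 0; v 1, w 1] := ⟨_, rfl⟩
  have hfx : ∀ x : E2, f x = x 0 • v + x 1 • w := by
    intro x
    rw [hf]
    apply ext2 <;> simp [Matrix.toLpLin_apply, dotProduct, Fin.sum_univ_two] <;> ring
  have hdet : |LinearMap.det f| = |om ε v w| := by
    rw [hf, LinearMap.det_toLpLin, Matrix.det_fin_two_of, om, abs_mul]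
    have : |ε| = 1 := by
      have h1 := sq_abs ε
      rw [hε] at h1
      nlinarith [abs_nonneg ε]
    rw [this, one_mul]; congr 1; ring
  have e : para A v w = (fun x => A + x) '' (f '' {x : E2 | ∀ i, x i ∈ Icc (1 / 8 : ℝ) (3 / 8)}) := by
    ext q; constructor
    · rintro ⟨s, t, hs, ht, rfl⟩
      refine ⟨_, ⟨!₂[s, t], ?_, rfl⟩, ?_⟩
      · intro i; fin_cases i
        · simpa using hs
        · simpa using ht
      · simp only [hfx]; simp [add_assoc]
    · rintro ⟨_, ⟨x, hx, rfl⟩, rfl⟩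
      exact ⟨x 0, x 1, hx 0, hx 1, by simp only [hfx, add_assoc]⟩
  rw [e, Set.image_add_left, measure_preimage_add, Measure.addHaar_image_linearMap, volume_square,
    hdet, ← ENNReal.ofReal_mul (abs_nonneg _)]
  congr 1; ring

/-- The triangles spanned by consecutive vectors of an angularly ordered family do not overlap,
so if each has area at least `1 / 2` their number is controlled by the area of a set containing
them. -/
lemma area_bound {ε : ℝ} (hε : ε ^ 2 = 1) (A : E2) (v : ℕ → E2) (N : ℕ) (Z : Finset ℕ) (U : Set E2)
    (hU : volume U ≠ ⊤) (hZ : ∀ i ∈ Z, i + 1 < N)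
    (hord : ∀ i j, i < j → j < N → om ε (v i) (v j) < 0)
    (hone : ∀ i ∈ Z, 1 ≤ |om ε (v i) (v (i + 1))|)
    (hsub : ∀ i ∈ Z, ∀ s t : ℝ, 0 < s → 0 < t → s + t < 1 → A + s • v i + t • v (i + 1) ∈ U) :
    (Z.card : ℝ) ≤ 16 * (volume U).toReal := by
  have hdisj : ∀ i ∈ Z, ∀ j ∈ Z, i < j →
      Disjoint (para A (v i) (v (i + 1))) (para A (v j) (v (j + 1))) := by
    intro i hi j hj hij
    rw [Set.disjoint_left]
    rintro q ⟨s, t, hs, ht, hq⟩ ⟨s', t', hs', ht', hq'⟩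
    have e : s • v i + t • v (i + 1) = s' • v j + t' • v (j + 1) := by
      have := hq.symm.trans hq'
      rw [add_assoc, add_assoc] at this
      exact add_left_cancel this
    have z : om ε (s • v i + t • v (i + 1)) (s' • v j + t' • v (j + 1)) = 0 := by
      rw [e]; simp only [om]; ring
    have z' : om ε (s • v i + t • v (i + 1)) (s' • v j + t' • v (j + 1)) =
        s * s' * om ε (v i) (v j) + s * t' * om ε (v i) (v (j + 1)) +
        t * s' * om ε (v (i + 1)) (v j) + t * t' * om ε (v (i + 1)) (v (j + 1)) := by
      simp only [om, PiLp.add_apply, PiLp.smul_apply, smul_eq_mul]; ring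
    have hs0 : 0 < s := by linarith [hs.1]
    have ht0 : 0 < t := by linarith [ht.1]
    have hs0' : 0 < s' := by linarith [hs'.1]
    have ht0' : 0 < t' := by linarith [ht'.1]
    have hjN := hZ j hj
    have k1 := mul_neg_of_pos_of_neg (mul_pos hs0 hs0') (hord i j hij (by omega))
    have k2 := mul_neg_of_pos_of_neg (mul_pos hs0 ht0') (hord i (j + 1) (by omega) hjN)
    have k4 := mul_neg_of_pos_of_neg (mul_pos ht0 ht0') (hord (i + 1) (j + 1) (by omega) hjN)
    have k3 : t * s' * om ε (v (i + 1)) (v j) ≤ 0 := by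
      rcases (Nat.succ_le_of_lt hij).lt_or_eq with h | h
      · exact (mul_neg_of_pos_of_neg (mul_pos ht0 hs0') (hord (i + 1) j h (by omega))).le
      · have : om ε (v (i + 1)) (v j) = 0 := by rw [← h]; simp only [om]; ring
        rw [this]; simp
    linarith
  have hpd : (Z : Set ℕ).PairwiseDisjoint (fun i => para A (v i) (v (i + 1))) := by
    intro i hi j hj hij
    rcases lt_or_gt_of_ne hij with h | h
    · exact hdisj i hi j hj h
    · exact (hdisj j hj i hi h).symm
  have hun : (⋃ i ∈ Z, para A (v i) (v (i + 1))) ⊆ U := by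
    intro q hq
    simp only [Set.mem_iUnion] at hq
    obtain ⟨i, hi, s, t, hs, ht, rfl⟩ := hq
    exact hsub i hi s t (by linarith [hs.1]) (by linarith [ht.1]) (by linarith [hs.2, ht.2])
  have h1 : (Z.card : ℝ≥0∞) * ENNReal.ofReal (1 / 16) ≤ volume U := by
    calc (Z.card : ℝ≥0∞) * ENNReal.ofReal (1 / 16) = ∑ i ∈ Z, ENNReal.ofReal (1 / 16) := by simp
      _ ≤ ∑ i ∈ Z, volume (para A (v i) (v (i + 1))) := by
        apply Finset.sum_le_sum; intro i hi
        rw [volume_para hε]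
        exact ENNReal.ofReal_le_ofReal (by linarith [hone i hi])
      _ = volume (⋃ i ∈ Z, para A (v i) (v (i + 1))) :=
        (measure_biUnion_finset hpd fun i _ => para_measurable _ _ _).symm
      _ ≤ volume U := measure_mono hun
  have h2 := ENNReal.toReal_mono hU h1
  rw [ENNReal.toReal_mul, ENNReal.toReal_natCast, ENNReal.toReal_ofReal (by norm_num)] at h2
  linarith

lemma norm_sub_le_angle {x y : E2} (hx : ‖x‖ = 1) (hy : ‖y‖ = 1) :
    ‖x - y‖ ≤ InnerProductGeometry.angle x y := by
  have h := Real.one_sub_sq_div_two_le_cos (x := InnerProductGeometry.angle x y)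
  rw [InnerProductGeometry.cos_angle, hx, hy] at h
  have h2 := norm_sub_sq_real x y
  rw [hx, hy] at h2
  apply abs_le_of_sq_le_sq' _ (InnerProductGeometry.angle_nonneg x y) |>.2
  linarith

lemma om_le {ε : ℝ} (hε : ε ^ 2 = 1) (x y : E2) : om ε x y ≤ ‖x‖ * ‖y‖ := by
  apply abs_le_of_sq_le_sq' _ (by positivity) |>.2
  have h1 := real_inner_self_eq_norm_sq x
  have h2 := real_inner_self_eq_norm_sq y
  rw [inner_eq] at h1 h2
  rw [mul_pow, ← h1, ← h2, om, mul_pow, hε]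
  nlinarith [sq_nonneg (x 0 * y 0 + x 1 * y 1)]

/-- Vectors making a small angle with the line orthogonal to the unit vector `n` span a small
area. -/
lemma om_le_of_inner {ε θ : ℝ} (hε : ε ^ 2 = 1) {n x y : E2} (hn : ‖n‖ = 1)
    (hx : |⟪x, n⟫| ≤ ‖x‖ * θ) (hy : |⟪y, n⟫| ≤ ‖y‖ * θ) : om ε x y ≤ 2 * (‖x‖ * ‖y‖ * θ) := by
  have hn2 : n 0 * n 0 + n 1 * n 1 = 1 := by
    rw [← inner_eq, real_inner_self_eq_norm_sq, hn]; norm_num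
  have e : om ε x y = ⟪x, n⟫ * om ε n y - ⟪y, n⟫ * om ε n x := by
    simp only [om, inner_eq]; linear_combination (-ε) * (x 0 * y 1 - x 1 * y 0) * hn2
  have habs : ∀ z : E2, |om ε n z| ≤ ‖z‖ := by
    intro z
    rw [abs_le]
    constructor
    · have := om_le hε n (-z)
      rw [norm_neg, hn] at this
      have e2 : om ε n (-z) = - om ε n z := by simp only [om, PiLp.neg_apply]; ring
      linarith
    · have := om_le hε n z
      rwa [hn, one_mul] at this
  have k1 : |⟪x, n⟫ * om ε n y| ≤ (‖x‖ * θ) * ‖y‖ := by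
    rw [abs_mul]; exact mul_le_mul hx (habs y) (abs_nonneg _) ((abs_nonneg _).trans hx)
  have k2 : |⟪y, n⟫ * om ε n x| ≤ (‖y‖ * θ) * ‖x‖ := by
    rw [abs_mul]; exact mul_le_mul hy (habs x) (abs_nonneg _) ((abs_nonneg _).trans hy)
  rw [e]
  have := (abs_le.1 k1).2
  have := (abs_le.1 k2).1
  linarith

lemma one_le_om {ε : ℝ} (hε : ε ^ 2 = 1) {p q r s : Fin 2 → ℤ}
    (h : 0 < om ε (ek p - ek q) (ek r - ek s)) : 1 ≤ om ε (ek p - ek q) (ek r - ek s) := by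
  have e : om ε (ek p - ek q) (ek r - ek s) =
      ε * (((p 0 - q 0) * (r 1 - s 1) - (p 1 - q 1) * (r 0 - s 0) : ℤ) : ℝ) := by
    simp [om, ek]
  have hε' : ε = 1 ∨ ε = -1 := by
    have : (ε - 1) * (ε + 1) = 0 := by linear_combination hε
    rcases mul_eq_zero.1 this with h | h
    · left; linarith
    · right; linarith
  rw [e] at h ⊢
  generalize (p 0 - q 0) * (r 1 - s 1) - (p 1 - q 1) * (r 0 - s 0) = z at *
  rcases hε' with rfl | rfl
  · rw [one_mul] at *
    exact_mod_cast h
  · have h' : (0 : ℝ) < ((-z : ℤ) : ℝ) := by push_cast; linarith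
    have h'' : (1 : ℝ) ≤ ((-z : ℤ) : ℝ) := by exact_mod_cast h'
    push_cast at h''; linarith

lemma one_le_dist {p q : Fin 2 → ℤ} (h : ek p ≠ ek q) : 1 ≤ dist (ek p) (ek q) := by
  rw [EuclideanSpace.dist_eq, Real.one_le_sqrt, Fin.sum_univ_two]
  have hpq : p 0 ≠ q 0 ∨ p 1 ≠ q 1 := by
    by_contra hc; push Not at hc
    exact h (ext2 (by simp [ek, hc.1]) (by simp [ek, hc.2]))
  simp only [Real.dist_eq, sq_abs]
  have e0 : (ek p) 0 - (ek q) 0 = ((p 0 - q 0 : ℤ) : ℝ) := by simp [ek]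
  have e1 : (ek p) 1 - (ek q) 1 = ((p 1 - q 1 : ℤ) : ℝ) := by simp [ek]
  rw [e0, e1]
  have key : (1 : ℤ) ≤ (p 0 - q 0) ^ 2 + (p 1 - q 1) ^ 2 := by
    rcases hpq with h | h
    · have : 0 < (p 0 - q 0) ^ 2 := by have := sub_ne_zero.2 h; positivity
      nlinarith [sq_nonneg (p 1 - q 1)]
    · have : 0 < (p 1 - q 1) ^ 2 := by have := sub_ne_zero.2 h; positivity
      nlinarith [sq_nonneg (p 0 - q 0)]
  exact_mod_cast key

/-! ### Counting visible lattice points -/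

/-- Points of the triangle `0 A B` outside `{ρ < a}` are within `O(|AB|)` of `A`. -/
lemma dist_le_of_inTri {ρ : E2 → ℝ} {m M a b : ℝ} (G : IsGauge ρ m M) {A B P : E2}
    (hab : b - a ≤ 2) (hA : ρ A ≤ b) (hB : ρ B ≤ b) (hL : 1 ≤ dist A B)
    (hP : InTri A B P) (hρP : a ≤ ρ P) : ‖P - A‖ ≤ (1 + 2 / m) * dist A B := by
  obtain ⟨s, t, hs, ht, hst, rfl⟩ := hP
  have hm := G.mpos
  have h1 := G.comb hs ht A B
  have h2 : a ≤ (s + t) * b := by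
    have := mul_le_mul_of_nonneg_left hA hs
    have := mul_le_mul_of_nonneg_left hB ht
    linarith
  have e : s • A + t • B - A = t • (B - A) - (1 - s - t) • A := by module
  have h3 : ‖s • A + t • B - A‖ ≤ t * dist A B + (1 - s - t) * ‖A‖ := by
    rw [e, dist_comm, dist_eq_norm]
    refine (norm_sub_le _ _).trans ?_
    rw [norm_smul, norm_smul, Real.norm_of_nonneg ht, Real.norm_of_nonneg (by linarith)]
  have h4 : m * ‖A‖ ≤ b := (G.lower A).trans hA
  have h5 : (1 - s - t) * ‖A‖ ≤ 2 / m := by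
    rw [le_div_iff₀ hm]
    have := mul_le_mul_of_nonneg_left h4 (by linarith : 0 ≤ 1 - s - t)
    nlinarith
  have h6 : t * dist A B ≤ dist A B := by nlinarith
  have h7 : 2 / m ≤ 2 / m * dist A B := by
    have : 0 < 2 / m := by positivity
    nlinarith
  linarith

/-- All but `O(1 + |Z|)` indices `i` have `i, i + 1, i + 2` outside the exceptional set `Z`. -/
lemma card_runs (n : ℕ) (Z E F : Finset ℕ) (hZE : ∀ i, i < n → i ∈ Z ∨ i ∈ E)
    (hF : ∀ i, i ∈ E → i + 1 ∈ E → i + 2 ∈ E → i ∈ F) :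
    n ≤ F.card + 3 * Z.card + 2 := by
  have hsub : Finset.range n ⊆
      F ∪ (Z ∪ (Z.image (fun i => i - 1) ∪ (Z.image (fun i => i - 2) ∪ {n - 1, n - 2}))) := by
    intro i hi
    rw [Finset.mem_range] at hi
    simp only [Finset.mem_union, Finset.mem_image, Finset.mem_insert, Finset.mem_singleton]
    rcases hZE i hi with h | h0
    · exact Or.inr (Or.inl h)
    by_cases hn1 : i + 1 < n
    · rcases hZE _ hn1 with h | h1
      · exact Or.inr (Or.inr (Or.inl ⟨_, h, by omega⟩))
      by_cases hn2 : i + 2 < n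
      · rcases hZE _ hn2 with h | h2
        · exact Or.inr (Or.inr (Or.inr (Or.inl ⟨_, h, by omega⟩)))
        exact Or.inl (hF i h0 h1 h2)
      · exact Or.inr (Or.inr (Or.inr (Or.inr (Or.inr (by omega)))))
    · exact Or.inr (Or.inr (Or.inr (Or.inr (Or.inl (by omega)))))
  have h := Finset.card_le_card hsub
  rw [Finset.card_range] at h
  have c1 := Finset.card_union_le F
    (Z ∪ (Z.image (fun i => i - 1) ∪ (Z.image (fun i => i - 2) ∪ {n - 1, n - 2})))
  have c2 := Finset.card_union_le Z
    (Z.image (fun i => i - 1) ∪ (Z.image (fun i => i - 2) ∪ {n - 1, n - 2}))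
  have c3 := Finset.card_union_le (Z.image (fun i => i - 1))
    (Z.image (fun i => i - 2) ∪ {n - 1, n - 2})
  have c4 := Finset.card_union_le (Z.image (fun i => i - 2)) {n - 1, n - 2}
  have c5 : (Z.image (fun i => i - 1)).card ≤ Z.card := Finset.card_image_le
  have c6 : (Z.image (fun i => i - 2)).card ≤ Z.card := Finset.card_image_le
  have c7 : ({n - 1, n - 2} : Finset ℕ).card ≤ 2 := Finset.card_le_two
  omega

/-- The constant in the bound for the number of crossing steps. -/
def stepConst (m M : ℝ) : ℝ :=
  16 * (8 * (1 + 2 / m)) ^ 2 * ((2 / (m / M) ^ 2) ^ 2 * (2 / (m / M)))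

set_option maxHeartbeats 1600000 in
/-- Lattice points `P 0, …, P (N - 1)` of the triangle `0 A B` visible from `A`, listed in angular
order around `A`: their number is bounded by the area of the part of the triangle outside
`{ρ < a}`, plus the number of steps of a convex lattice polygon of length `O(|AB|)` turning by at
most the angle between the normals. -/
lemma chain_bound {ρ : E2 → ℝ} {m M a b ε κA κB : ℝ} (G : IsGauge ρ m M) (hε : ε ^ 2 = 1)
    {A B nA nB : E2} (ha : 0 < a) (hab : b - a ≤ 2) (hA : ρ A < b) (hB : ρ B < b)
    (hL : 1 ≤ dist A B) (hAB : 0 < om ε A B) (hnA : ‖nA‖ = 1) (hnB : ‖nB‖ = 1)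
    (hκA : 0 < κA) (hκB : 0 < κB)
    (hA1 : ∀ x, ⟪x, nA⟫ ≤ κA * ρ x) (hA2 : ⟪A, nA⟫ = κA * ρ A)
    (hB1 : ∀ x, ⟪x, nB⟫ ≤ κB * ρ x) (hB2 : ⟪B, nB⟫ = κB * ρ B)
    (U : Set E2) (hU : volume U ≠ ⊤) (hUsub : ∀ x, InTri A B x → a ≤ ρ x → x ∈ U)
    {kA : Fin 2 → ℤ} (hkA : ek kA = A)
    (N : ℕ) (k : ℕ → Fin 2 → ℤ) (hT : ∀ i < N, InTri A B (ek (k i)))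
    (hV : ∀ i < N, Vis ρ a A (ek (k i)))
    (hord : ∀ i j, i < j → j < N → om ε (ek (k i) - A) (ek (k j) - A) < 0) :
    (N : ℝ) ≤ 7 + 48 * (volume U).toReal + (stepConst m M + 1) *
      (dist A B ^ ((2 : ℝ) / 3) * InnerProductGeometry.angle nA nB ^ ((1 : ℝ) / 3)) := by
  classical
  obtain ⟨P, hP⟩ : ∃ P : ℕ → E2, P = fun i => ek (k i) := ⟨_, rfl⟩
  have hT' : ∀ i < N, InTri A B (P i) := by rw [hP]; exact hT
  have hV' : ∀ i < N, Vis ρ a A (P i) := by rw [hP]; exact hV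
  have hord' : ∀ i j, i < j → j < N → om ε (P i - A) (P j - A) < 0 := by rw [hP]; exact hord
  set Θ := InnerProductGeometry.angle nA nB with hΘ
  set L := dist A B with hLd
  have hΘ0 : 0 ≤ Θ := InnerProductGeometry.angle_nonneg _ _
  have hm := G.mpos
  have hM := G.Mpos
  have hA0 : A ≠ 0 := by
    rintro rfl
    simp [om] at hAB
  have hA0' : 0 < ‖A‖ := norm_pos_iff.2 hA0
  obtain ⟨κ, hκ⟩ : ∃ κ, κ = m / M := ⟨_, rfl⟩
  have hκ0 : 0 < κ := by rw [hκ]; positivity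
  have hκ1 : κ ≤ 1 := by
    rw [hκ, div_le_one hM]
    exact le_of_mul_le_mul_right ((G.lower A).trans (G.upper A)) (norm_pos_iff.2 hA0)
  -- the normal at `A` is uniformly transversal to the radial direction
  have hAn : κ * ‖A‖ ≤ ⟪A, nA⟫ := by
    have h1 : 1 ≤ κA * M := by
      have := hA1 nA
      rw [real_inner_self_eq_norm_sq, hnA] at this
      have h2 := G.upper nA
      rw [hnA] at h2
      have := mul_le_mul_of_nonneg_left h2 hκA.le
      linarith
    rw [hA2, hκ, div_mul_eq_mul_div, div_le_iff₀ hM]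
    have h3 := G.lower A
    have h4 : 0 ≤ ρ A := G.nonneg A
    nlinarith
  obtain ⟨u, hu2, hu⟩ := exists_frame hε hA0 hnA hκ0 hAn
  -- `cr i` says that the step from `P i` to `P (i + 1)` crosses `{ρ < a}`
  obtain ⟨cr, hcr⟩ : ∃ cr : ℕ → Prop, cr = fun i =>
    ∃ l : ℝ, 0 < l ∧ l < 1 ∧ ρ (P i + l • (P (i + 1) - P i)) < a := ⟨_, rfl⟩
  obtain ⟨E, hE⟩ : ∃ E, E = (Finset.range (N - 1)).filter cr := ⟨_, rfl⟩
  obtain ⟨Z, hZ⟩ : ∃ Z, Z = (Finset.range (N - 1)).filter (fun i => ¬ cr i) := ⟨_, rfl⟩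
  have hEm : ∀ i ∈ E, i + 1 < N ∧ cr i := by
    intro i hi
    rw [hE, Finset.mem_filter, Finset.mem_range] at hi
    exact ⟨by omega, hi.2⟩
  have hZm : ∀ i ∈ Z, i + 1 < N ∧ ¬ cr i := by
    intro i hi
    rw [hZ, Finset.mem_filter, Finset.mem_range] at hi
    exact ⟨by omega, hi.2⟩
  have hZcard : (Z.card : ℝ) ≤ 16 * (volume U).toReal := by
    refine area_bound hε A (fun i => P i - A) N Z U hU (fun i hi => (hZm i hi).1) hord' ?_ ?_
    · intro i hi
      have h1 := hord' i (i + 1) (by omega) (hZm i hi).1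
      have e : om ε (P i - A) (P (i + 1) - A) = - om ε (P (i + 1) - A) (P i - A) := by
        simp only [om, PiLp.sub_apply]; ring
      have h2 : 0 < om ε (P (i + 1) - A) (P i - A) := by linarith
      rw [e, abs_neg]
      refine le_trans ?_ (le_abs_self _)
      rw [hP, ← hkA] at h2 ⊢
      exact one_le_om hε h2
    · intro i hi s t hs ht hst
      obtain ⟨hi1, hi2⟩ := hZm i hi
      apply hUsub
      · have hA' : InTri A B A := ⟨1, 0, by norm_num, by norm_num, by norm_num, by simp⟩
        have h1 := (hT' i (by omega)).comb (hT' (i + 1) hi1) (s := s / (s + t)) (t := t / (s + t))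
          (by positivity) (by positivity) (by rw [← add_div, div_self (by positivity)])
        have h2 := hA'.comb h1 (s := 1 - (s + t)) (t := s + t) (by linarith) (by linarith)
          (by linarith)
        convert h2 using 1
        rw [smul_add, smul_smul, smul_smul, mul_div_cancel₀ _ (by positivity : s + t ≠ 0),
          mul_div_cancel₀ _ (by positivity : s + t ≠ 0)]
        module
      · by_contra hcon
        push Not at hcon
        apply hi2
        rw [hcr]
        exact exists_cross G ha hAB (hT' i (by omega)) (hT' (i + 1) hi1) (hV' i (by omega))
          (hord' i (i + 1) (by omega) hi1) hs ht hst hcon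
  -- crossing parameters, crossing points and steps
  have hl : ∀ i, ∃ l : ℝ, i ∈ E → 0 < l ∧ l < 1 ∧ ρ (P i + l • (P (i + 1) - P i)) < a := by
    intro i
    by_cases hi : i ∈ E
    · have := (hEm i hi).2
      rw [hcr] at this
      obtain ⟨l, hl⟩ := this
      exact ⟨l, fun _ => hl⟩
    · exact ⟨0, fun h => absurd h hi⟩
  choose l hl using hl
  obtain ⟨c, hc⟩ : ∃ c : ℕ → E2, ∀ i, c i = P i + l i • (P (i + 1) - P i) := ⟨_, fun _ => rfl⟩
  obtain ⟨w, hw⟩ : ∃ w : ℕ → E2, ∀ i, w i = P (i + 1) - P i := ⟨_, fun _ => rfl⟩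
  have hcρ : ∀ i ∈ E, ρ (c i) < a := fun i hi => by rw [hc]; exact (hl i hi).2.2
  have hedge : ∀ i ∈ E, 0 < om ε A (w i) ∧ ⟪w i, nA⟫ ≤ 0 ∧ (0 ≤ ⟪A, nB⟫ → 0 ≤ ⟪w i, nB⟫) := by
    intro i hi
    obtain ⟨hi1, -⟩ := hEm i hi
    obtain ⟨h0, h1, h2⟩ := hl i hi
    rw [hw]
    exact edge_facts G ha hAB (hT' i (by omega)) (hT' (i + 1) hi1) (hV' i (by omega))
      (hV' (i + 1) hi1) (hord' i (i + 1) (by omega) hi1) h0 h1 h2 hκA hκB hA1 hA2 hB1 hB2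
  obtain ⟨ℓ, hℓ⟩ : ∃ ℓ : ℕ → ℝ, ∀ i, ℓ i = ⟪w i, u⟫ := ⟨_, fun _ => rfl⟩
  have hℓn : ∀ i ∈ E, κ ^ 2 / 2 * ‖w i‖ ≤ ℓ i := fun i hi => by
    rw [hℓ]; exact hu _ (hedge i hi).1.le (hedge i hi).2.1
  have hwpos : ∀ i ∈ E, 0 < ‖w i‖ := fun i hi => by
    rw [norm_pos_iff]; intro h
    have := (hedge i hi).1
    rw [h] at this; simp [om] at this
  have hℓ0 : ∀ i ∈ E, 0 < ℓ i := fun i hi => lt_of_lt_of_le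
    (mul_pos (by positivity) (hwpos i hi)) (hℓn i hi)
  have hcT : ∀ i ∈ E, InTri A B (c i) := fun i hi => by
    obtain ⟨hi1, -⟩ := hEm i hi
    obtain ⟨h0, h1, h2⟩ := hl i hi
    have := (hT' i (by omega)).comb (hT' (i + 1) hi1) (s := 1 - l i) (t := l i) (by linarith)
      h0.le (by linarith)
    rw [hc]; convert this using 1; module
  have homle : ∀ i j, i ≤ j → j < N → om ε (P i - A) (P j - A) ≤ 0 := by
    intro i j hij hj
    rcases hij.lt_or_eq with h | h
    · exact (hord' i j h hj).le
    · rw [h]; simp only [om]; linarith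
  have hpair : ∀ i ∈ E, ∀ j ∈ E, i < j → 0 < om ε (w i) (w j) ∧ 0 < ⟪c j - c i, u⟫ := by
    intro i hi j hj hij
    obtain ⟨hi1, -⟩ := hEm i hi
    obtain ⟨hj1, -⟩ := hEm j hj
    obtain ⟨h0, h1, h2⟩ := hl i hi
    obtain ⟨g0, g1, g2⟩ := hl j hj
    have h1' : 0 < 1 - l i := by linarith
    have g1' : 0 < 1 - l j := by linarith
    have key := pair_facts (ε := ε) (A := A) (P := P i) (Q := P (i + 1)) (P' := P j)
      (Q' := P (j + 1)) (c := c i) (c' := c j) G (hV' _ hi1) (hV' j (by omega)) h1 g0 (hc i) (hc j)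
      (hcρ i hi) (hcρ j hj) (om_left_nonneg hAB (hcT i hi)) (by rw [← hw]; exact (hedge i hi).1)
      (by rw [← hw]; exact (hedge j hj).1) ?_ ?_ ?_ ?_ ?_
    · rw [← hw, ← hw] at key
      exact ⟨key.1, key.2 u (by rw [← hℓ]; exact hℓ0 i hi) (by rw [← hℓ]; exact hℓ0 j hj)⟩
    · have e : om ε (c i - A) (c j - A) =
          (1 - l i) * (1 - l j) * om ε (P i - A) (P j - A) +
          (1 - l i) * l j * om ε (P i - A) (P (j + 1) - A) +
          l i * (1 - l j) * om ε (P (i + 1) - A) (P j - A) +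
          l i * l j * om ε (P (i + 1) - A) (P (j + 1) - A) := by
        rw [hc, hc]
        simp only [om, PiLp.sub_apply, PiLp.add_apply, PiLp.smul_apply, smul_eq_mul]; ring
      rw [e]
      have k1 := mul_neg_of_pos_of_neg (mul_pos h1' g1') (hord' i j hij (by omega))
      have k2 := mul_neg_of_pos_of_neg (mul_pos h1' g0) (hord' i (j + 1) (by omega) hj1)
      have k4 := mul_neg_of_pos_of_neg (mul_pos h0 g0) (hord' (i + 1) (j + 1) (by omega) hj1)
      have k3 := mul_nonpos_of_nonneg_of_nonpos (mul_pos h0 g1').le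
        (homle (i + 1) j (by omega) (by omega))
      linarith
    · have e : om ε (c i - A) (P (i + 1) - A) = (1 - l i) * om ε (P i - A) (P (i + 1) - A) := by
        rw [hc]
        simp only [om, PiLp.sub_apply, PiLp.add_apply, PiLp.smul_apply, smul_eq_mul]; ring
      rw [e]
      exact mul_nonpos_of_nonneg_of_nonpos h1'.le (homle _ _ (by omega) hi1)
    · have e : om ε (P (i + 1) - A) (c j - A) = (1 - l j) * om ε (P (i + 1) - A) (P j - A) +
          l j * om ε (P (i + 1) - A) (P (j + 1) - A) := by
        rw [hc]
        simp only [om, PiLp.sub_apply, PiLp.add_apply, PiLp.smul_apply, smul_eq_mul]; ring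
      rw [e]
      have k1 := mul_nonpos_of_nonneg_of_nonpos g1'.le (homle (i + 1) j (by omega) (by omega))
      have k2 := mul_nonpos_of_nonneg_of_nonpos g0.le (homle (i + 1) (j + 1) (by omega) hj1)
      linarith
    · have e : om ε (c i - A) (P j - A) = (1 - l i) * om ε (P i - A) (P j - A) +
          l i * om ε (P (i + 1) - A) (P j - A) := by
        rw [hc]
        simp only [om, PiLp.sub_apply, PiLp.add_apply, PiLp.smul_apply, smul_eq_mul]; ring
      rw [e]
      have k1 := mul_nonpos_of_nonneg_of_nonpos h1'.le (homle i j (by omega) (by omega))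
      have k2 := mul_nonpos_of_nonneg_of_nonpos h0.le (homle (i + 1) j (by omega) (by omega))
      linarith
    · have e : om ε (P j - A) (c j - A) = l j * om ε (P j - A) (P (j + 1) - A) := by
        rw [hc]
        simp only [om, PiLp.sub_apply, PiLp.add_apply, PiLp.smul_apply, smul_eq_mul]; ring
      rw [e]
      exact mul_nonpos_of_nonneg_of_nonpos g0.le (homle _ _ (by omega) hj1)
  have hom1 : ∀ i ∈ E, ∀ j ∈ E, i < j → 1 ≤ om ε (w i) (w j) := by
    intro i hi j hj hij
    have h := (hpair i hi j hj hij).1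
    rw [hw, hw, hP] at h ⊢
    exact one_le_om hε h
  -- the area spanned by two crossing steps is small when the normals turn little
  have homΘ : ∀ i ∈ E, ∀ j ∈ E, om ε (w i) (w j) ≤ 2 / κ * (‖w i‖ * ‖w j‖ * Θ) := by
    intro i hi j hj
    have hnn := norm_sub_le_angle hnA hnB
    rw [← hΘ] at hnn
    have hww : 0 ≤ ‖w i‖ * ‖w j‖ := by positivity
    rcases le_or_gt 0 ⟪A, nB⟫ with h | h
    · have hsm : ∀ i ∈ E, |⟪w i, nA⟫| ≤ ‖w i‖ * Θ := by
        intro i hi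
        have h1 := (hedge i hi).2.1
        have h2 := (hedge i hi).2.2 h
        have h3 : -⟪w i, nA⟫ ≤ ‖w i‖ * ‖nA - nB‖ := by
          have := real_inner_le_norm (w i) (nB - nA)
          rw [inner_sub_right, norm_sub_rev] at this
          linarith
        rw [abs_of_nonpos h1]
        exact h3.trans (mul_le_mul_of_nonneg_left hnn (norm_nonneg _))
      refine (om_le_of_inner hε hnA (hsm i hi) (hsm j hj)).trans ?_
      apply mul_le_mul_of_nonneg_right _ (by positivity)
      rw [le_div_iff₀ hκ0]; linarith
    · have h1 : κ ≤ Θ := by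
        have h2 : ⟪A, nA - nB⟫ ≤ ‖A‖ * ‖nA - nB‖ := real_inner_le_norm _ _
        rw [inner_sub_right] at h2
        have h3 : κ * ‖A‖ ≤ ‖nA - nB‖ * ‖A‖ := by linarith
        exact (le_of_mul_le_mul_right h3 hA0').trans hnn
      refine (om_le hε _ _).trans ?_
      have h2 : 1 ≤ 2 / κ * Θ := by
        rw [div_mul_eq_mul_div, le_div_iff₀ hκ0]; linarith
      calc ‖w i‖ * ‖w j‖ ≤ (‖w i‖ * ‖w j‖) * (2 / κ * Θ) := le_mul_of_one_le_right hww h2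
        _ = _ := by ring
  -- the steps whose two neighbours also cross
  obtain ⟨F, hF⟩ : ∃ F, F = E.filter (fun i => i + 1 ∈ E ∧ i + 2 ∈ E) := ⟨_, rfl⟩
  have hFm : ∀ i ∈ F, i ∈ E ∧ i + 1 ∈ E ∧ i + 2 ∈ E := fun i hi => by
    rw [hF, Finset.mem_filter] at hi; exact hi
  have hcount := card_runs (N - 1) Z E F
    (fun i hi => by
      rw [hZ, hE, Finset.mem_filter, Finset.mem_filter, Finset.mem_range]; tauto)
    (fun i h0 h1 h2 => by rw [hF, Finset.mem_filter]; exact ⟨h0, h1, h2⟩)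
  have hm2 : 0 < 1 + 2 / m := by positivity
  have hsum : ∑ i ∈ F, ℓ (i + 1) ≤ 8 * (1 + 2 / m) * L := by
    have hmain := sum_increments_le F E (fun i => ⟪c i - A, u⟫) (2 * ((1 + 2 / m) * L))
      (fun i hi => by
        obtain ⟨hi1, -⟩ := hEm i hi
        obtain ⟨h0, h1, -⟩ := hl i hi
        have d1 := dist_le_of_inTri G hab hA.le hB.le hL (hT' i (by omega))
          (by simpa using hV' i (by omega) 1 zero_le_one le_rfl)
        have d2 := dist_le_of_inTri G hab hA.le hB.le hL (hT' (i + 1) hi1)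
          (by simpa using hV' (i + 1) hi1 1 zero_le_one le_rfl)
        have e : c i - A = (1 - l i) • (P i - A) + l i • (P (i + 1) - A) := by rw [hc]; module
        have d3 : ‖c i - A‖ ≤ (1 + 2 / m) * L := by
          rw [e]
          refine (norm_add_le _ _).trans ?_
          rw [norm_smul, norm_smul, Real.norm_of_nonneg h0.le, Real.norm_of_nonneg (by linarith)]
          have := mul_le_mul_of_nonneg_left d1 (by linarith : 0 ≤ 1 - l i)
          have := mul_le_mul_of_nonneg_left d2 h0.le
          linarith
        refine (abs_real_inner_le_norm _ _).trans ?_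
        rw [mul_comm]
        exact mul_le_mul hu2 d3 (norm_nonneg _) (by norm_num))
      (fun i hi j hj hij => by
        have := (hpair i hi j hj hij).2
        have e : c j - c i = (c j - A) - (c i - A) := by module
        rw [e, inner_sub_left] at this
        linarith)
      (fun i hi => ⟨(hFm i hi).1, (hFm i hi).2.2⟩)
    rw [abs_of_nonneg (by positivity)] at hmain
    refine le_trans (Finset.sum_le_sum fun i hi => ?_) (hmain.trans (by linarith))
    obtain ⟨f0, f1, f2⟩ := hFm i hi
    have e : (c (i + 2) - A) - (c i - A) = (1 - l i) • w i + w (i + 1) + l (i + 2) • w (i + 2) := by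
      rw [hc, hc, hw, hw, hw]; module
    rw [← inner_sub_left, e, inner_add_left, inner_add_left, inner_smul_left, inner_smul_left,
      ← hℓ, ← hℓ, ← hℓ]
    simp only [conj_trivial]
    have := mul_nonneg (by linarith [(hl i f0).2.1] : 0 ≤ 1 - l i) (hℓ0 i f0).le
    have := mul_nonneg (hl _ f2).1.le (hℓ0 _ f2).le
    linarith
  -- slopes of the steps relative to `u`
  obtain ⟨s, hs⟩ : ∃ s : ℕ → ℝ, ∀ i, s i = om ε u (w (i + 1)) / (‖u‖ ^ 2 * ℓ (i + 1)) :=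
    ⟨_, fun _ => rfl⟩
  have hsd : ∀ i ∈ F, ∀ j ∈ F,
      s j - s i = om ε (w (i + 1)) (w (j + 1)) / (ℓ (i + 1) * ℓ (j + 1)) := by
    intro i hi j hj
    have hi0 := hℓ0 _ (hFm i hi).2.1
    have hj0 := hℓ0 _ (hFm j hj).2.1
    have hu0 : ‖u‖ ≠ 0 := by
      intro h
      rw [norm_eq_zero] at h
      rw [hℓ, h, inner_zero_right] at hi0
      exact lt_irrefl _ hi0
    have e : om ε u (w (j + 1)) * ℓ (i + 1) - om ε u (w (i + 1)) * ℓ (j + 1) =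
        ‖u‖ ^ 2 * om ε (w (i + 1)) (w (j + 1)) := by
      rw [hℓ, hℓ, ← real_inner_self_eq_norm_sq u]
      simp only [om, inner_eq]; ring
    rw [hs, hs, div_sub_div _ _ (by positivity) (by positivity),
      div_eq_div_iff (by positivity) (by positivity)]
    linear_combination (‖u‖ ^ 2 * ℓ (i + 1) * ℓ (j + 1)) * e
  obtain ⟨T, hTd⟩ : ∃ T, T = (2 / κ ^ 2) ^ 2 * (2 / κ) * Θ := ⟨_, rfl⟩
  have hfin := card_cube_le (Λ := 8 * (1 + 2 / m) * L) (T := T) (by rw [hTd]; positivity) F s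
    (fun i => ℓ (i + 1)) (fun i hi => hℓ0 _ (hFm i hi).2.1) hsum
    (fun i hi j hj hij => by
      have hi0 := hℓ0 _ (hFm i hi).2.1
      have hj0 := hℓ0 _ (hFm j hj).2.1
      rw [hsd i hi j hj, div_mul_cancel₀ _ (by positivity)]
      exact hom1 _ (hFm i hi).2.1 _ (hFm j hj).2.1 (by omega))
    (fun i hi j hj hij => by
      have hi1 := (hFm i hi).2.1
      have hj1 := (hFm j hj).2.1
      have hi0 := hℓ0 _ hi1
      have hj0 := hℓ0 _ hj1
      have hconv : ∀ i ∈ E, ‖w i‖ ≤ 2 / κ ^ 2 * ℓ i := by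
        intro i hi
        have := hℓn i hi
        rw [div_mul_eq_mul_div, le_div_iff₀ (by positivity)]
        linarith
      rw [hsd i hi j hj, div_le_iff₀ (by positivity), hTd]
      have h2 := mul_le_mul (hconv _ hi1) (hconv _ hj1) (norm_nonneg _)
        (mul_nonneg (by positivity) hi0.le)
      calc _ ≤ 2 / κ * (‖w (i + 1)‖ * ‖w (j + 1)‖ * Θ) := homΘ _ hi1 _ hj1
        _ ≤ 2 / κ * ((2 / κ ^ 2 * ℓ (i + 1)) * (2 / κ ^ 2 * ℓ (j + 1)) * Θ) := by gcongr
        _ = _ := by ring)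
  obtain ⟨X, hX⟩ : ∃ X, X = L ^ ((2 : ℝ) / 3) * Θ ^ ((1 : ℝ) / 3) := ⟨_, rfl⟩
  have hL0 : 0 ≤ L := by linarith
  have hX0 : 0 ≤ X := by rw [hX]; positivity
  have hX3 : X ^ 3 = L ^ 2 * Θ := by
    rw [hX, mul_pow, ← Real.rpow_natCast, ← Real.rpow_natCast, ← Real.rpow_mul hL0,
      ← Real.rpow_mul hΘ0, ← Real.rpow_natCast]
    norm_num
  have hK0 : 0 ≤ stepConst m M := by unfold stepConst; positivity
  have hFcard : (F.card : ℝ) ≤ 4 + (stepConst m M + 1) * X := by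
    have hKX : 0 ≤ (stepConst m M + 1) * X := by positivity
    rcases hfin with h | h
    · linarith
    · have h3 : (F.card : ℝ) ^ 3 ≤ ((stepConst m M + 1) * X) ^ 3 := by
        calc (F.card : ℝ) ^ 3 ≤ 16 * (8 * (1 + 2 / m) * L) ^ 2 * T := h
          _ = stepConst m M * X ^ 3 := by rw [hX3, hTd, stepConst, hκ]; ring
          _ ≤ (stepConst m M + 1) ^ 3 * X ^ 3 := by
            refine mul_le_mul_of_nonneg_right ?_ (pow_nonneg hX0 3)
            exact (le_add_of_nonneg_right zero_le_one).trans
              (le_self_pow₀ (le_add_of_nonneg_left hK0) (by norm_num))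
          _ = _ := by ring
      have := le_of_pow_le_pow_left₀ (by norm_num) hKX h3
      linarith
  have hNr : (N : ℝ) ≤ F.card + 3 * Z.card + 3 := by
    have : N ≤ F.card + 3 * Z.card + 3 := by omega
    exact_mod_cast this
  rw [← hX]
  linarith

/-! ### From maximal segments to visible points -/

lemma ek_injective : Function.Injective ek := by
  intro p q h
  funext i
  have : ek p i = ek q i := by rw [h]
  simpa [ek] using this

lemma mem_hull_iff {A B P : E2} : P ∈ convexHull ℝ {(0 : E2), A, B} ↔ InTri A B P := by
  rw [convexHull_insert (by simp), convexHull_pair]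
  simp only [convexJoin_singleton_left, mem_iUnion, InTri]
  constructor
  · rintro ⟨x, ⟨u, v, hu, hv, huv, rfl⟩, ⟨p, q, hp, hq, hpq, rfl⟩⟩
    refine ⟨q * u, q * v, by positivity, by positivity, ?_, by module⟩
    have : q * u + q * v = q := by rw [← mul_add, huv, mul_one]
    linarith
  · rintro ⟨s, t, hs, ht, hst, rfl⟩
    rcases (add_nonneg hs ht).eq_or_lt with h | h
    · have hs0 : s = 0 := by linarith
      have ht0 : t = 0 := by linarith
      exact ⟨A, left_mem_segment ℝ A B, by simp [hs0, ht0, left_mem_segment]⟩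
    · refine ⟨(s / (s + t)) • A + (t / (s + t)) • B, ⟨s / (s + t), t / (s + t), by positivity,
        by positivity, by rw [← add_div, div_self h.ne'], rfl⟩, 1 - (s + t), s + t, by linarith,
        h.le, by ring, ?_⟩
      rw [smul_zero, zero_add, smul_add, smul_smul, smul_smul, mul_div_cancel₀ _ h.ne',
        mul_div_cancel₀ _ (ne_of_gt h)]

/-- The support function of a bounded neighbourhood of the origin is a gauge. -/
lemma exists_isGauge {Ω : Set E2} (hopen : IsOpen Ω) (hbdd : Bornology.IsBounded Ω)
    (h0 : (0 : E2) ∈ Ω) : ∃ m M, IsGauge (suppFn Ω) m M := by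
  obtain ⟨d, hd, hball⟩ := Metric.isOpen_iff.1 hopen 0 h0
  obtain ⟨M, hM⟩ := hbdd.exists_norm_le
  have hM0 : 0 < |M| + 1 := by positivity
  have hne : ∀ ξ : E2, ((fun x => ⟪x, ξ⟫) '' Ω).Nonempty := fun ξ => ⟨_, 0, h0, rfl⟩
  have hle : ∀ ξ : E2, ∀ x ∈ Ω, ⟪x, ξ⟫ ≤ (|M| + 1) * ‖ξ‖ := fun ξ x hx =>
    (real_inner_le_norm x ξ).trans (mul_le_mul_of_nonneg_right
      ((hM x hx).trans ((le_abs_self M).trans (by linarith))) (norm_nonneg _))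
  have hbd : ∀ ξ : E2, BddAbove ((fun x => ⟪x, ξ⟫) '' Ω) := fun ξ =>
    ⟨_, by rintro _ ⟨x, hx, rfl⟩; exact hle ξ x hx⟩
  have hmem : ∀ ξ : E2, ∀ x ∈ Ω, ⟪x, ξ⟫ ≤ suppFn Ω ξ := fun ξ x hx =>
    le_csSup (hbd ξ) ⟨x, hx, rfl⟩
  have hleS : ∀ (ξ : E2) (c : ℝ), (∀ x ∈ Ω, ⟪x, ξ⟫ ≤ c) → suppFn Ω ξ ≤ c := fun ξ c h =>
    csSup_le (hne ξ) (by rintro _ ⟨x, hx, rfl⟩; exact h x hx)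
  have hhom : ∀ t : ℝ, 0 ≤ t → ∀ x, suppFn Ω (t • x) ≤ t * suppFn Ω x := fun t ht x =>
    hleS _ _ fun y hy => by
      rw [real_inner_smul_right]
      exact mul_le_mul_of_nonneg_left (hmem x y hy) ht
  have hnn : ∀ x, 0 ≤ suppFn Ω x := fun x => by simpa using hmem x 0 h0
  refine ⟨d / 2, |M| + 1, by positivity, hM0, ?_, ?_, ?_, fun x => hleS _ _ (hle x)⟩
  · intro x y
    refine hleS _ _ fun z hz => ?_
    rw [inner_add_right]
    exact add_le_add (hmem x z hz) (hmem y z hz)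
  · intro t ht x
    refine le_antisymm (hhom t ht x) ?_
    rcases ht.eq_or_lt with rfl | ht
    · rw [zero_mul]; exact hnn _
    · have := mul_le_mul_of_nonneg_left (hhom t⁻¹ (by positivity) (t • x)) ht.le
      rwa [smul_smul, inv_mul_cancel₀ ht.ne', one_smul, ← mul_assoc, mul_inv_cancel₀ ht.ne',
        one_mul] at this
  · intro x
    rcases eq_or_ne x 0 with rfl | hx
    · simpa using hnn 0
    have hx' : 0 < ‖x‖ := norm_pos_iff.2 hx
    have h := hmem x ((d / 2 / ‖x‖) • x) (hball (by
      rw [mem_ball_zero_iff, norm_smul, Real.norm_of_nonneg (by positivity),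
        div_mul_cancel₀ _ hx'.ne']
      linarith))
    rw [real_inner_smul_left, real_inner_self_eq_norm_sq] at h
    refine le_of_eq_of_le ?_ h
    field_simp

/-- A supporting normal of `{ρ ≤ 1}` at the boundary point on the ray through `A`, rewritten as a
linear minorant of a multiple of `ρ` which is tight at `A`. -/
lemma exists_support {ρ : E2 → ℝ} {m M : ℝ} (G : IsGauge ρ m M) {A n : E2} (hA : 0 < ρ A)
    (hn : ‖n‖ = 1) (h : ∀ y, ρ y ≤ 1 → ⟪y - (ρ A)⁻¹ • A, n⟫ ≤ 0) :
    ∃ κ : ℝ, 0 < κ ∧ (∀ x, ⟪x, n⟫ ≤ κ * ρ x) ∧ ⟪A, n⟫ = κ * ρ A := by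
  have h1 : ∀ x, ⟪x, n⟫ ≤ ⟪A, n⟫ / ρ A * ρ x := by
    intro x
    rcases eq_or_ne x 0 with rfl | hx
    · simp [G.zero]
    have hx' : 0 < ρ x := lt_of_lt_of_le (mul_pos G.mpos (norm_pos_iff.2 hx)) (G.lower x)
    have h2 := h ((ρ x)⁻¹ • x) (by
      rw [G.hom _ (by positivity), inv_mul_cancel₀ hx'.ne'])
    rw [inner_sub_left, real_inner_smul_left, real_inner_smul_left] at h2
    have h3 : (ρ x)⁻¹ * ⟪x, n⟫ ≤ ⟪A, n⟫ / ρ A := by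
      rw [div_eq_inv_mul]; linarith
    rwa [inv_mul_eq_div, div_le_iff₀ hx'] at h3
  refine ⟨_, ?_, h1, by field_simp⟩
  have h4 := h1 n
  rw [real_inner_self_eq_norm_sq, hn] at h4
  by_contra hcon
  push Not at hcon
  have := mul_nonpos_of_nonpos_of_nonneg hcon (G.nonneg n)
  linarith

/-- A finite set on which `σ` is injective can be listed in increasing order of `σ`. -/
lemma exists_sorted {α : Type*} [Inhabited α] (T : Finset α) (σ : α → ℝ)
    (hσ : Set.InjOn σ T) :
    ∃ k : ℕ → α, (∀ i < T.card, k i ∈ T) ∧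
      ∀ i j, i < j → j < T.card → σ (k i) < σ (k j) := by
  classical
  have hc : (T.image σ).card = T.card := Finset.card_image_of_injOn hσ
  have hex : ∀ i : ℕ, ∃ x : α, ∀ hi : i < T.card,
      x ∈ T ∧ σ x = (T.image σ).orderEmbOfFin hc ⟨i, hi⟩ := by
    intro i
    by_cases hi : i < T.card
    · obtain ⟨x, hx, hx'⟩ := Finset.mem_image.1 ((T.image σ).orderEmbOfFin_mem hc ⟨i, hi⟩)
      exact ⟨x, fun _ => ⟨hx, hx'⟩⟩
    · exact ⟨default, fun h => absurd h hi⟩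
  choose k hk using hex
  refine ⟨k, fun i hi => (hk i hi).1, fun i j hij hj => ?_⟩
  rw [(hk i (hij.trans hj)).2, (hk j hj).2]
  exact ((T.image σ).orderEmbOfFin hc).strictMono hij

/-- The bound for the maximal lattice segments issuing from one of the two endpoints. -/
lemma card_segments_le {ρ : E2 → ℝ} {m M a b ε : ℝ} (G : IsGauge ρ m M) (hε : ε ^ 2 = 1)
    {A B nA nB : E2} (ha : 0 < a) (hab : b - a ≤ 2) (hA : a ≤ ρ A ∧ ρ A < b)
    (hB : a ≤ ρ B ∧ ρ B < b) (hL : 1 ≤ dist A B) (hAB : 0 < om ε A B)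
    (hnA : ‖nA‖ = 1) (hnB : ‖nB‖ = 1)
    (hsA : ∀ y, ρ y ≤ 1 → ⟪y - (ρ A)⁻¹ • A, nA⟫ ≤ 0)
    (hsB : ∀ y, ρ y ≤ 1 → ⟪y - (ρ B)⁻¹ • B, nB⟫ ≤ 0)
    {kA : Fin 2 → ℤ} (hkA : ek kA = A) {U : Set E2}
    (hUdef : U = {x | a ≤ ρ x ∧ ρ x < b} ∩ convexHull ℝ {(0 : E2), A, B}) :
    (Nat.card {k : Fin 2 → ℤ | ek k ≠ A ∧ segment ℝ A (ek k) ⊆ U ∧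
      ∀ k' : Fin 2 → ℤ, segment ℝ A (ek k') ⊆ U →
        segment ℝ A (ek k) ⊆ segment ℝ A (ek k') → ek k' = ek k} : ℝ) ≤
      7 + 48 * (volume U).toReal + (stepConst m M + 1) *
      (dist A B ^ ((2 : ℝ) / 3) * InnerProductGeometry.angle nA nB ^ ((1 : ℝ) / 3)) := by
  obtain ⟨κA, hκA, hA1, hA2⟩ := exists_support G (ha.trans_le hA.1) hnA hsA
  obtain ⟨κB, hκB, hB1, hB2⟩ := exists_support G (ha.trans_le hB.1) hnB hsB
  have hb : 0 < b := ha.trans_le (hA.1.trans hA.2.le)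
  have hm := G.mpos
  have hM := G.Mpos
  have hU : volume U ≠ ⊤ := by
    have hbd : Bornology.IsBounded (convexHull ℝ {(0 : E2), A, B}) :=
      isBounded_convexHull.2 (Set.toFinite _).isBounded
    rw [hUdef]
    exact (hbd.subset inter_subset_right).measure_lt_top.ne
  have hUsub : ∀ x, InTri A B x → a ≤ ρ x → x ∈ U := by
    intro x hx hax
    rw [hUdef]
    refine ⟨⟨hax, ?_⟩, mem_hull_iff.2 hx⟩
    obtain ⟨s, t, hs, ht, hst, rfl⟩ := hx
    refine (G.comb hs ht A B).trans_lt ?_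
    obtain ⟨c, hc⟩ : ∃ c, c = max (ρ A) (ρ B) := ⟨_, rfl⟩
    have hcb : c < b := by rw [hc]; exact max_lt hA.2 hB.2
    have hcA : ρ A ≤ c := by rw [hc]; exact le_max_left _ _
    have hcB : ρ B ≤ c := by rw [hc]; exact le_max_right _ _
    have h1 := mul_le_mul_of_nonneg_left hcA hs
    have h2 := mul_le_mul_of_nonneg_left hcB ht
    have h3 : (s + t) * c ≤ 1 * c :=
      mul_le_mul_of_nonneg_right hst ((G.nonneg A).trans hcA)
    linarith
  obtain ⟨T, hTd⟩ : ∃ T : Set (Fin 2 → ℤ), T = {k : Fin 2 → ℤ | ek k ≠ A ∧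
      segment ℝ A (ek k) ⊆ U ∧ ∀ k' : Fin 2 → ℤ, segment ℝ A (ek k') ⊆ U →
        segment ℝ A (ek k) ⊆ segment ℝ A (ek k') → ek k' = ek k} := ⟨_, rfl⟩
  rw [← hTd]
  by_cases hfin : T.Finite
  swap
  · have h0 : Nat.card T = 0 := Set.Infinite.card_eq_zero hfin
    have := InnerProductGeometry.angle_nonneg nA nB
    have hK0 : 0 ≤ stepConst m M := by unfold stepConst; positivity
    rw [h0, Nat.cast_zero]
    positivity
  obtain ⟨σ, hσ⟩ : ∃ σ : (Fin 2 → ℤ) → ℝ,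
      ∀ k, σ k = om ε A (ek k) / (om ε A B - om ε (ek k) B) := ⟨_, fun _ => rfl⟩
  -- in the basis `B, -A`, the points have coordinates `v * σ, v` relative to `A`
  have hrep : ∀ k ∈ T, ∃ v : ℝ, 0 < v ∧ ek k = A + v • (σ k • B - A) := by
    intro k hk
    rw [hTd] at hk
    obtain ⟨hne, hseg, -⟩ := hk
    have hkU := hseg (right_mem_segment ℝ A (ek k))
    rw [hUdef] at hkU
    obtain ⟨s, t, hs, ht, hst, hP⟩ := mem_hull_iff.1 hkU.2
    have hs1 : s < 1 := by
      rcases lt_or_ge s 1 with h | h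
      · exact h
      · have h1 : s = 1 := by linarith
        have h2 : t = 0 := by linarith
        exact absurd (by rw [hP, h1, h2]; simp) hne
    have hs1' : 0 < 1 - s := by linarith
    have e1 : om ε A (ek k) = t * om ε A B := by
      rw [hP]; simp only [om, PiLp.add_apply, PiLp.smul_apply, smul_eq_mul]; ring
    have e2 : om ε A B - om ε (ek k) B = (1 - s) * om ε A B := by
      rw [hP]; simp only [om, PiLp.add_apply, PiLp.smul_apply, smul_eq_mul]; ring
    refine ⟨1 - s, hs1', ?_⟩
    rw [hσ, e1, e2, mul_div_mul_right _ _ hAB.ne', smul_sub, smul_smul,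
      mul_div_cancel₀ _ hs1'.ne', hP]
    module
  -- two lattice points of `T` on the same ray from `A` coincide by maximality
  have hsub : ∀ (d : E2) (v v' : ℝ), 0 < v → v ≤ v' →
      segment ℝ A (A + v • d) ⊆ segment ℝ A (A + v' • d) := by
    intro d v v' hv hvv'
    refine (convex_segment A (A + v' • d)).segment_subset (left_mem_segment ℝ _ _) ?_
    have hv' : 0 < v' := hv.trans_le hvv'
    refine ⟨1 - v / v', v / v', ?_, by positivity, by ring, ?_⟩
    · rw [sub_nonneg, div_le_one hv']; exact hvv'
    · rw [smul_add, smul_smul, div_mul_cancel₀ _ hv'.ne']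
      module
  have hinj : Set.InjOn σ T := by
    intro p hp q hq hpq
    obtain ⟨v, hv, ep⟩ := hrep p hp
    obtain ⟨v', hv', eq⟩ := hrep q hq
    rw [hTd] at hp hq
    apply ek_injective
    rcases le_total v v' with h | h
    · refine (hp.2.2 q hq.2.1 ?_).symm
      rw [ep, eq, ← hpq]
      exact hsub _ _ _ hv h
    · refine hq.2.2 p hp.2.1 ?_
      rw [ep, eq, ← hpq]
      exact hsub _ _ _ hv' h
  obtain ⟨k, hkT, hkσ⟩ := exists_sorted hfin.toFinset σ (by rwa [hfin.coe_toFinset])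
  have hkT' : ∀ i < hfin.toFinset.card, k i ∈ T := fun i hi => hfin.mem_toFinset.1 (hkT i hi)
  have hseg : ∀ i < hfin.toFinset.card, segment ℝ A (ek (k i)) ⊆ U := fun i hi => by
    have := hkT' i hi
    rw [hTd] at this
    exact this.2.1
  rw [Nat.card_coe_set_eq, Set.ncard_eq_toFinset_card T hfin]
  refine chain_bound G hε ha hab hA.2 hB.2 hL hAB hnA hnB hκA hκB hA1 hA2 hB1 hB2 U hU hUsub hkA
    _ k ?_ ?_ ?_
  · intro i hi
    have := hseg i hi (right_mem_segment ℝ _ _)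
    rw [hUdef] at this
    exact mem_hull_iff.1 this.2
  · intro i hi s hs0 hs1
    have : A + s • (ek (k i) - A) ∈ U :=
      hseg i hi ⟨1 - s, s, by linarith, hs0, by ring, by module⟩
    rw [hUdef] at this
    exact this.1.1
  · intro i j hij hj
    obtain ⟨v, hv, ei⟩ := hrep _ (hkT' i (hij.trans hj))
    obtain ⟨v', hv', ej⟩ := hrep _ (hkT' j hj)
    have e : om ε (ek (k i) - A) (ek (k j) - A) =
        v * v' * om ε A B * (σ (k i) - σ (k j)) := by
      generalize σ (k i) = x at ei ⊢
      generalize σ (k j) = y at ej ⊢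
      rw [ei, ej]
      simp only [om, PiLp.add_apply, PiLp.sub_apply, PiLp.smul_apply, smul_eq_mul]; ring
    rw [e]
    exact mul_neg_of_pos_of_neg (by positivity) (sub_neg.2 (hkσ i j hij hj))

/-- Lemma 8.1: let `Ω` be a bounded open convex planar domain containing
the origin with curvature bounded below in the generalized sense, `10 ≤ r ≤ R`,
`√R ≤ h ≤ R`, `𝒜 = {r − 1/h ≤ ρ* < r + 1/h}` and `𝔸 = 𝒜 ∩ ℤ²`.  Let `A, B` be two
consecutive (in counterclockwise order) extreme points of the convex hull of `𝔸`, let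
`S` be the closed triangle with vertices `A, B, 0`, and let `nA, nB` be the outward unit
normals of `∂Ω*` at the boundary points of `Ω*` on the rays through `A` resp. `B`
(uniquely determined, and characterized by the supporting property hypothesized below);
`Θ = ∠(nA, nB)` is then the total turning of the normal across the sector.  If `N⁻`
(resp. `N⁺`) denotes the number of maximal lattice line segments contained in `𝒜 ∩ S`
with `A` (resp. `B`) as an endpoint, then
`N⁻ + N⁺ ≤ C (1 + area(𝒜 ∩ S) + |AB|^{2/3} Θ^{1/3})` with `C` independent of
`r, R, h, A, B`. -/
theorem statement14 (Ω : Set E2) (hconv : Convex ℝ Ω) (hopen : IsOpen Ω)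
    (hbdd : Bornology.IsBounded Ω) (h0 : (0 : E2) ∈ Ω) (hcurv : CurvBddBelow Ω) :
    ∃ C : ℝ, ∀ r R h : ℝ, 10 ≤ r → r ≤ R → Real.sqrt R ≤ h → h ≤ R →
      ∀ 𝒜 : Set E2, 𝒜 = {x | r - 1 / h ≤ suppFn Ω x ∧ suppFn Ω x < r + 1 / h} →
      ∀ 𝔸 : Set E2, 𝔸 = {x ∈ 𝒜 | ∃ k : Fin 2 → ℤ, ek k = x} →
      ∀ A B : E2, A ∈ Set.extremePoints ℝ (convexHull ℝ 𝔸) →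
        B ∈ Set.extremePoints ℝ (convexHull ℝ 𝔸) → A ≠ B →
        -- `B` lies counterclockwise from `A`:
        0 < A 0 * B 1 - A 1 * B 0 →
        -- `A` and `B` are consecutive: no other extreme point lies in the closed cone
        -- spanned by `A` and `B`:
        (∀ X ∈ Set.extremePoints ℝ (convexHull ℝ 𝔸), X ≠ A → X ≠ B →
          ¬∃ s t : ℝ, 0 ≤ s ∧ 0 ≤ t ∧ X = s • A + t • B) →
      ∀ S : Set E2, S = convexHull ℝ {(0 : E2), A, B} →
      ∀ nA nB : E2, ‖nA‖ = 1 → ‖nB‖ = 1 →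
        (∀ y : E2, suppFn Ω y ≤ 1 → ⟪y - (suppFn Ω A)⁻¹ • A, nA⟫ ≤ 0) →
        (∀ y : E2, suppFn Ω y ≤ 1 → ⟪y - (suppFn Ω B)⁻¹ • B, nB⟫ ≤ 0) →
      ((Nat.card {k : Fin 2 → ℤ | ek k ≠ A ∧ segment ℝ A (ek k) ⊆ 𝒜 ∩ S ∧
            ∀ k' : Fin 2 → ℤ, segment ℝ A (ek k') ⊆ 𝒜 ∩ S →
              segment ℝ A (ek k) ⊆ segment ℝ A (ek k') → ek k' = ek k} : ℝ) +
        (Nat.card {k : Fin 2 → ℤ | ek k ≠ B ∧ segment ℝ B (ek k) ⊆ 𝒜 ∩ S ∧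
            ∀ k' : Fin 2 → ℤ, segment ℝ B (ek k') ⊆ 𝒜 ∩ S →
              segment ℝ B (ek k) ⊆ segment ℝ B (ek k') → ek k' = ek k} : ℝ)) ≤
        C * (1 + (volume (𝒜 ∩ S)).toReal +
          dist A B ^ ((2 : ℝ) / 3) * InnerProductGeometry.angle nA nB ^ ((1 : ℝ) / 3)) := by
  obtain ⟨m, M, G⟩ := exists_isGauge hopen hbdd h0
  have hm := G.mpos
  have hM := G.Mpos
  have hK0 : 0 ≤ stepConst m M := by unfold stepConst; positivity
  refine ⟨2 * (48 + (stepConst m M + 1)), ?_⟩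
  intro r R h hr hrR hRh hhR 𝒜 h𝒜 𝔸 h𝔸 A B hA hB hne hAB _ S hS nA nB hnA hnB hsA hsB
  have hh1 : 1 ≤ h := le_trans (Real.one_le_sqrt.2 (by linarith)) hRh
  have hh2 : 1 / h ≤ 1 := by rw [div_le_one (by linarith)]; exact hh1
  have hA' : A ∈ 𝔸 := extremePoints_convexHull_subset hA
  have hB' : B ∈ 𝔸 := extremePoints_convexHull_subset hB
  rw [h𝔸] at hA' hB'
  obtain ⟨hA𝒜, kA, hkA⟩ := hA'
  obtain ⟨hB𝒜, kB, hkB⟩ := hB'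
  rw [h𝒜] at hA𝒜 hB𝒜
  have hL : 1 ≤ dist A B := by
    rw [← hkA, ← hkB] at hne ⊢
    exact one_le_dist hne
  have h1 := card_segments_le (ε := 1) (U := 𝒜 ∩ S) G (by norm_num) (by linarith) (by linarith)
    hA𝒜 hB𝒜 hL (by rw [om]; linarith) hnA hnB hsA hsB hkA (by rw [h𝒜, hS])
  have h2 := card_segments_le (ε := -1) (U := 𝒜 ∩ S) G (by norm_num) (by linarith) (by linarith)
    hB𝒜 hA𝒜 (by rwa [dist_comm]) (by rw [om]; linarith) hnB hnA hsB hsA hkB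
    (by rw [h𝒜, hS, Set.pair_comm A B])
  rw [dist_comm, InnerProductGeometry.angle_comm] at h2
  have hV : 0 ≤ (volume (𝒜 ∩ S)).toReal := ENNReal.toReal_nonneg
  have hX : 0 ≤ dist A B ^ ((2 : ℝ) / 3) * InnerProductGeometry.angle nA nB ^ ((1 : ℝ) / 3) := by
    have := InnerProductGeometry.angle_nonneg nA nB
    positivity
  have h3 := mul_nonneg hK0 hV
  refine (add_le_add h1 h2).trans ?_
  linarith

end
end

section
/- Let Ω be a bounded open convex set in ℝ² containing the origin in its interior, with r₁ < 1 < r₂ the radii of inscribed and circumscribed circles centered at the origin. Then there is a constant C depending only on r₁ and r₂ such that for all r ≥ 10 and h ≥ 1, the convex hull of the set 𝔸 = {ℓ ∈ ℤ² : r − 1/h ≤ ρ*(ℓ) < r + 1/h} has at most C r^{2/3} extreme points. -/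
/-!
Only boundedness of `𝔸` matters: since `Ω` contains a ball about the origin, `suppFn Ω` dominates a
multiple of the norm, so `𝔸` lies in a disc of radius `M = 4 r / r₁`, and the claim becomes
the classical bound `O(M ^ (2/3))` for the number of vertices of a convex lattice polygon.

Each extreme point of the hull of the finite set `𝔸` is the strict maximizer over `𝔸` of a linear
functional (`exposing_functional`). The extreme points whose functional lies in a given quadrant
form a monotone chain. Its steps are pairwise distinct integer vectors, by convexity
(`quadrant_count`). At most `L ^ 2` of them have both components of size at most `L`, and since the
`ℓ¹`-lengths of the steps sum to at most `4 M`, at most `4 M / L` of them are longer (`chain_count`).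
Taking `L` of order `r ^ (1/3)` balances the two terms.
-/

open MeasureTheory Set
open scoped Pointwise RealInnerProductSpace NNReal ENNReal

noncomputable section

/-! ### Counting the edges of a lattice chain -/

/-- A chain of lattice points running right and down inside a square of side `2 * M`, with pairwise
distinct steps: at most `L ^ 2` steps have both components at most `L`, and each of the others
uses up at least `L` of the total `ℓ¹`-length, which telescopes to at most `4 * M`. -/
lemma chain_count (n L : ℕ) (hL : 0 < L) (M : ℝ) (X Y : ℕ → ℤ)
    (hX : ∀ i < n, X i < X (i + 1)) (hY : ∀ i < n, Y (i + 1) < Y i)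
    (hMX : (X n : ℝ) - X 0 ≤ 2 * M) (hMY : (Y 0 : ℝ) - Y n ≤ 2 * M)
    (hinj : ∀ i < n, ∀ j < n, X (i + 1) - X i = X (j + 1) - X j →
      Y i - Y (i + 1) = Y j - Y (j + 1) → i = j) :
    (n : ℝ) ≤ L ^ 2 + 4 * M / L := by
  classical
  let P : ℕ → Prop := fun i => X (i + 1) - X i ≤ L ∧ Y i - Y (i + 1) ≤ L
  have hsplit := Finset.card_filter_add_card_filter_not (s := Finset.range n) P
  have hshort : ((Finset.range n).filter P).card ≤ L ^ 2 := by
    have : ((Finset.range n).filter P).card ≤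
        (Finset.Icc (1 : ℤ) L ×ˢ Finset.Icc (1 : ℤ) L).card := by
      apply Finset.card_le_card_of_injOn (fun i => (X (i + 1) - X i, Y i - Y (i + 1)))
      · intro i hi
        simp only [Finset.coe_filter, Finset.mem_range, Set.mem_ofPred_eq, P] at hi
        have := hX i hi.1
        have := hY i hi.1
        simp only [Finset.coe_product, Finset.coe_Icc, Set.mem_prod, Set.mem_Icc]
        omega
      · intro i hi j hj hij
        simp only [Finset.coe_filter, Finset.mem_range, Set.mem_ofPred_eq] at hi hj
        simp only [Prod.mk.injEq] at hij
        exact hinj i hi.1 j hj.1 hij.1 hij.2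
    simpa [Finset.card_product, sq] using this
  have hlong : (((Finset.range n).filter (fun i => ¬ P i)).card : ℤ) * L ≤
      (X n - X 0) + (Y 0 - Y n) := by
    rw [← Finset.sum_range_sub X n, ← Finset.sum_range_sub' Y n, ← Finset.sum_add_distrib,
      ← nsmul_eq_mul]
    refine (Finset.card_nsmul_le_sum _ (fun i => X (i + 1) - X i + (Y i - Y (i + 1))) _ ?_).trans
      (Finset.sum_le_sum_of_subset_of_nonneg (Finset.filter_subset _ _) ?_)
    · intro i hi
      simp only [Finset.mem_filter, Finset.mem_range, P] at hi
      have := hX i hi.1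
      have := hY i hi.1
      omega
    · intro i hi _
      have := hX i (Finset.mem_range.1 hi)
      have := hY i (Finset.mem_range.1 hi)
      omega
  rw [Finset.card_range] at hsplit
  have hLr : (0 : ℝ) < L := by exact_mod_cast hL
  have hlong' : (((Finset.range n).filter (fun i => ¬ P i)).card : ℝ) ≤ 4 * M / L := by
    rw [le_div_iff₀ hLr]
    have : (((Finset.range n).filter (fun i => ¬ P i)).card : ℝ) * L ≤
      (X n - X 0) + (Y 0 - Y n) := by exact_mod_cast hlong
    linarith
  have hs' : (((Finset.range n).filter P).card : ℝ) ≤ L ^ 2 := by exact_mod_cast hshort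
  have : (n : ℝ) = ((Finset.range n).filter P).card +
    ((Finset.range n).filter (fun i => ¬ P i)).card := by exact_mod_cast hsplit.symm
  linarith

/-- Let the steps `d = (d₁, -d₂)` and `e = (e₁, -e₂)` go downwards. If a functional in the first
quadrant is positive on `d` and negative on `e`, then `d` is less steep than `e`, that is,
`d₂ * e₁ < d₁ * e₂`. A functional with the opposite signs gives the reverse inequality. -/
lemma slope_contra (a b a' b' d₁ d₂ e₁ e₂ : ℝ) (ha : 0 ≤ a) (hb : 0 ≤ b) (ha' : 0 ≤ a')
    (hb' : 0 ≤ b') (hd₂ : 0 < d₂) (he₂ : 0 < e₂)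
    (h₁ : b * d₂ < a * d₁) (h₂ : a * e₁ < b * e₂)
    (h₃ : b' * e₂ < a' * e₁) (h₄ : a' * d₁ < b' * d₂) : False := by
  have hab : 0 < a := by
    rcases ha.eq_or_lt with rfl | h
    · nlinarith [mul_nonneg hb hd₂.le]
    · exact h
  have hab' : 0 < a' := by
    rcases ha'.eq_or_lt with rfl | h
    · nlinarith [mul_nonneg hb' he₂.le]
    · exact h
  have k₁ : d₂ * e₁ < d₁ * e₂ := by
    have : a * (d₂ * e₁) < a * (d₁ * e₂) := by
      linarith [mul_lt_mul_of_pos_right h₁ he₂, mul_lt_mul_of_pos_right h₂ hd₂]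
    exact lt_of_mul_lt_mul_left this hab.le
  have k₂ : d₁ * e₂ < d₂ * e₁ := by
    have : a' * (d₁ * e₂) < a' * (d₂ * e₁) := by
      linarith [mul_lt_mul_of_pos_right h₃ hd₂, mul_lt_mul_of_pos_right h₄ he₂]
    exact lt_of_mul_lt_mul_left this hab'.le
  exact lt_asymm k₁ k₂

/-- Points of `S` that are strict maximizers over `S` of functionals from the closed first quadrant
form a chain running right and down, whose steps are distinct because its slopes steepen. -/
lemma quadrant_count {ι : Type*} (S : Finset ι) (X Y : ι → ℤ) (L : ℕ) (hL : 0 < L) (M : ℝ)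
    (hM : 0 ≤ M) (hX : ∀ v ∈ S, |(X v : ℝ)| ≤ M) (hY : ∀ v ∈ S, |(Y v : ℝ)| ≤ M)
    (hexp : ∀ v ∈ S, ∃ a b : ℝ, 0 ≤ a ∧ 0 ≤ b ∧
      ∀ w ∈ S, w ≠ v → a * X w + b * Y w < a * X v + b * Y v) :
    (S.card : ℝ) ≤ L ^ 2 + 4 * M / L + 1 := by
  classical
  choose! a b ha hb hab using hexp
  have hanti : ∀ v ∈ S, ∀ w ∈ S, v ≠ w → X v ≤ X w → Y w < Y v := by
    intro v hv w hw hvw hx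
    by_contra! hy
    have h := hab v hv w hw hvw.symm
    have hx' : (X v : ℝ) ≤ X w := by exact_mod_cast hx
    have hy' : (Y v : ℝ) ≤ Y w := by exact_mod_cast hy
    have := mul_le_mul_of_nonneg_left hx' (ha v hv)
    have := mul_le_mul_of_nonneg_left hy' (hb v hv)
    linarith
  have hXinj : Set.InjOn X S := by
    intro v hv w hw h
    by_contra hne
    exact lt_asymm (hanti v hv w hw hne h.le) (hanti w hw v hv (Ne.symm hne) h.ge)
  rcases S.eq_empty_or_nonempty with rfl | ⟨v₀, hv₀⟩
  · simp only [Finset.card_empty, Nat.cast_zero]; positivity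
  obtain ⟨n, hn⟩ : ∃ n, S.card = n + 1 :=
    ⟨S.card - 1, by have := Finset.card_pos.2 ⟨v₀, hv₀⟩; omega⟩
  have hcard : (S.image X).card = n + 1 := by rw [Finset.card_image_of_injOn hXinj, hn]
  let e := (S.image X).orderEmbOfFin hcard
  have hp : ∀ i : ℕ, ∃ v ∈ S, ∀ hi : i < n + 1, X v = e ⟨i, hi⟩ := by
    intro i
    by_cases hi : i < n + 1
    · obtain ⟨v, hv, h⟩ := Finset.mem_image.1 ((S.image X).orderEmbOfFin_mem hcard ⟨i, hi⟩)
      exact ⟨v, hv, fun _ => h⟩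
    · exact ⟨v₀, hv₀, fun h => absurd h hi⟩
  choose p hpS hpe using hp
  have hmono : ∀ i j, i < j → j ≤ n → X (p i) < X (p j) := by
    intro i j hij hj
    rw [hpe i (by omega), hpe j (by omega)]
    exact e.strictMono (by simpa using hij)
  have hne : ∀ i j, i < j → j ≤ n → p i ≠ p j := fun i j hij hj h =>
    (hmono i j hij hj).ne (by rw [h])
  have hmonoY : ∀ i j, i < j → j ≤ n → Y (p j) < Y (p i) := fun i j hij hj =>
    hanti _ (hpS i) _ (hpS j) (hne i j hij hj) (hmono i j hij hj).le
  -- A step repeated after the `i`-th one would contradict the functionals exposing its end point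
  -- `p (i + 1)` and the start point `p j` of the repetition.
  have hnoeq : ∀ i j, i < j → j < n →
      X (p (i + 1)) - X (p i) = X (p (j + 1)) - X (p j) →
      Y (p i) - Y (p (i + 1)) = Y (p j) - Y (p (j + 1)) → False := by
    intro i j hij hj hdx hdy
    have hdx' : (X (p (i + 1)) : ℝ) - X (p i) = X (p (j + 1)) - X (p j) := by exact_mod_cast hdx
    have hdy' : (Y (p i) : ℝ) - Y (p (i + 1)) = Y (p j) - Y (p (j + 1)) := by exact_mod_cast hdy
    have h1 := hab _ (hpS (i + 1)) _ (hpS i) (hne i (i + 1) (by omega) (by omega))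
    have h4 := hab _ (hpS j) _ (hpS (j + 1)) (hne j (j + 1) (by omega) (by omega)).symm
    rcases Nat.lt_or_ge (i + 1) j with hlt | hge
    · have h2 := hab _ (hpS (i + 1)) _ (hpS j) (hne _ _ hlt hj.le).symm
      have h3 := hab _ (hpS j) _ (hpS (i + 1)) (hne _ _ hlt hj.le)
      have c1 : (X (p i) : ℝ) < X (p (i + 1)) := by
        exact_mod_cast hmono i (i + 1) (by omega) (by omega)
      have c2 : (Y (p (i + 1)) : ℝ) < Y (p i) := by
        exact_mod_cast hmonoY i (i + 1) (by omega) (by omega)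
      have c3 : (X (p (i + 1)) : ℝ) < X (p j) := by exact_mod_cast hmono _ j hlt hj.le
      have c4 : (Y (p j) : ℝ) < Y (p (i + 1)) := by exact_mod_cast hmonoY _ j hlt hj.le
      refine slope_contra (a (p (i + 1))) (b (p (i + 1))) (a (p j)) (b (p j))
        (X (p (i + 1)) - X (p i)) (Y (p i) - Y (p (i + 1)))
        (X (p j) - X (p (i + 1))) (Y (p (i + 1)) - Y (p j))
        (ha _ (hpS _)) (hb _ (hpS _)) (ha _ (hpS _)) (hb _ (hpS _))
        (by linarith) (by linarith)
        (by linarith) (by linarith) (by linarith) ?_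
      rw [hdx', hdy']
      linarith
    · obtain rfl : j = i + 1 := by omega
      have e1 : (X (p (i + 1 + 1)) : ℝ) = 2 * X (p (i + 1)) - X (p i) := by linarith
      have e2 : (Y (p (i + 1 + 1)) : ℝ) = 2 * Y (p (i + 1)) - Y (p i) := by linarith
      rw [e1, e2] at h4
      linarith
  have := chain_count n L hL M (fun i => X (p i)) (fun i => Y (p i))
    (fun i hi => hmono i (i + 1) (by omega) (by omega))
    (fun i hi => hmonoY i (i + 1) (by omega) (by omega))
    (by linarith [abs_le.1 (hX _ (hpS n)), abs_le.1 (hX _ (hpS 0))])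
    (by linarith [abs_le.1 (hY _ (hpS n)), abs_le.1 (hY _ (hpS 0))])
    (fun i hi j hj hx hy => by
      rcases lt_trichotomy i j with h | h | h
      · exact (hnoeq i j h hj hx hy).elim
      · exact h
      · exact (hnoeq j i h hi hx.symm hy.symm).elim)
  rw [hn]
  push_cast
  linarith

/-- The previous bound without a sign condition: split `S` into four parts by the signs of the
exposing functionals, and reflect each part to the first quadrant. -/
lemma exposed_count {ι : Type*} (S : Finset ι) (X Y : ι → ℤ) (L : ℕ) (hL : 0 < L) (M : ℝ)
    (hM : 0 ≤ M) (hX : ∀ v ∈ S, |(X v : ℝ)| ≤ M) (hY : ∀ v ∈ S, |(Y v : ℝ)| ≤ M)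
    (hexp : ∀ v ∈ S, ∃ a b : ℝ,
      ∀ w ∈ S, w ≠ v → a * X w + b * Y w < a * X v + b * Y v) :
    (S.card : ℝ) ≤ 4 * (L ^ 2 + 4 * M / L + 1) := by
  classical
  choose! a b hab using hexp
  have h₁ := Finset.card_filter_add_card_filter_not (s := S) (fun v => 0 ≤ a v)
  have h₂ := Finset.card_filter_add_card_filter_not
    (s := S.filter (fun v => 0 ≤ a v)) (fun v => 0 ≤ b v)
  have h₃ := Finset.card_filter_add_card_filter_not
    (s := S.filter (fun v => ¬ 0 ≤ a v)) (fun v => 0 ≤ b v)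
  have q₁ := quadrant_count ((S.filter (fun v => 0 ≤ a v)).filter (fun v => 0 ≤ b v))
    X Y L hL M hM (by grind) (by grind) (by
      intro v hv
      simp only [Finset.mem_filter] at hv
      refine ⟨a v, b v, hv.1.2, hv.2, fun w hw hne => ?_⟩
      simp only [Finset.mem_filter] at hw
      exact hab v hv.1.1 w hw.1.1 hne)
  have q₂ := quadrant_count ((S.filter (fun v => 0 ≤ a v)).filter (fun v => ¬ 0 ≤ b v))
    X (fun v => - Y v) L hL M hM (by grind) (by
      intro v hv
      simp only [Finset.mem_filter] at hv
      push_cast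
      rw [abs_neg]
      exact hY v hv.1.1) (by
      intro v hv
      simp only [Finset.mem_filter, not_le] at hv
      refine ⟨a v, - b v, hv.1.2, by linarith, fun w hw hne => ?_⟩
      simp only [Finset.mem_filter] at hw
      push_cast
      linarith [hab v hv.1.1 w hw.1.1 hne])
  have q₃ := quadrant_count ((S.filter (fun v => ¬ 0 ≤ a v)).filter (fun v => 0 ≤ b v))
    (fun v => - X v) Y L hL M hM (by
      intro v hv
      simp only [Finset.mem_filter] at hv
      push_cast
      rw [abs_neg]
      exact hX v hv.1.1) (by grind) (by
      intro v hv
      simp only [Finset.mem_filter, not_le] at hv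
      refine ⟨- a v, b v, by linarith, hv.2, fun w hw hne => ?_⟩
      simp only [Finset.mem_filter] at hw
      push_cast
      linarith [hab v hv.1.1 w hw.1.1 hne])
  have q₄ := quadrant_count ((S.filter (fun v => ¬ 0 ≤ a v)).filter (fun v => ¬ 0 ≤ b v))
    (fun v => - X v) (fun v => - Y v) L hL M hM (by
      intro v hv
      simp only [Finset.mem_filter] at hv
      push_cast
      rw [abs_neg]
      exact hX v hv.1.1) (by
      intro v hv
      simp only [Finset.mem_filter] at hv
      push_cast
      rw [abs_neg]
      exact hY v hv.1.1) (by
      intro v hv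
      simp only [Finset.mem_filter, not_le] at hv
      refine ⟨- a v, - b v, by linarith, by linarith, fun w hw hne => ?_⟩
      simp only [Finset.mem_filter] at hw
      push_cast
      linarith [hab v hv.1.1 w hw.1.1 hne])
  rw [← h₁, ← h₂, ← h₃]
  push_cast
  linarith

/-! ### Extreme points and the size of `𝔸` -/

/-- An extreme point `v` of the hull of a finite set `A` is outside the hull of `A \ {v}`, and is
therefore strictly separated from it. -/
lemma exposing_functional {A : Set E2} (hA : A.Finite) {v : E2}
    (hv : v ∈ extremePoints ℝ (convexHull ℝ A)) :
    ∃ a b : ℝ, ∀ w ∈ A, w ≠ v → a * w 0 + b * w 1 < a * v 0 + b * v 1 := by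
  rw [(convex_convexHull ℝ A).mem_extremePoints_iff_mem_sdiff_convexHull_sdiff] at hv
  have hv' : v ∉ convexHull ℝ (A \ {v}) := fun h =>
    hv.2 (convexHull_mono (sdiff_subset_sdiff_left (subset_convexHull ℝ A)) h)
  obtain ⟨f, u, hfu, hf⟩ := geometric_hahn_banach_point_closed (convex_convexHull ℝ (A \ {v}))
    ((hA.subset sdiff_subset).isClosed_convexHull ℝ) hv'
  have hform : ∀ x : E2, f x = x 0 * f (EuclideanSpace.single 0 1) +
      x 1 * f (EuclideanSpace.single 1 1) := by
    intro x
    have hx : x = x 0 • EuclideanSpace.single (0 : Fin 2) (1 : ℝ) +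
        x 1 • EuclideanSpace.single (1 : Fin 2) (1 : ℝ) := by
      ext i
      fin_cases i <;> simp
    conv_lhs => rw [hx]
    simp
  refine ⟨- f (EuclideanSpace.single 0 1), - f (EuclideanSpace.single 1 1), fun w hw hne => ?_⟩
  have := hf w (subset_convexHull ℝ _ ⟨hw, hne⟩)
  rw [hform] at this hfu
  linarith

/-- Testing the supremum at `x / ‖x‖` times half the inscribed radius. -/
lemma norm_le_suppFn {Ω : Set E2} {r₁ r₂ : ℝ} (hr₁ : 0 < r₁) (hin : Metric.ball 0 r₁ ⊆ Ω)
    (hout : Ω ⊆ Metric.closedBall 0 r₂) (x : E2) : r₁ / 2 * ‖x‖ ≤ suppFn Ω x := by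
  rcases eq_or_ne x 0 with rfl | hx
  · have h0 : (0 : E2) ∈ Ω := hin (by simpa using hr₁)
    have hne : Ω.Nonempty := ⟨0, h0⟩
    simp [suppFn, hne.image_const]
  have hn : 0 < ‖x‖ := norm_pos_iff.2 hx
  apply le_csSup
  · refine ⟨r₂ * ‖x‖, ?_⟩
    rintro _ ⟨y, hy, rfl⟩
    have hy' : ‖y‖ ≤ r₂ := by simpa using hout hy
    exact (real_inner_le_norm y x).trans (by gcongr)
  · refine ⟨(r₁ / 2 / ‖x‖) • x, hin ?_, ?_⟩
    · rw [mem_ball_zero_iff, norm_smul, Real.norm_of_nonneg (by positivity)]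
      field_simp
      linarith
    · simp only [real_inner_smul_left, real_inner_self_eq_norm_sq]
      field_simp

lemma ek_apply (k : Fin 2 → ℤ) (i : Fin 2) : ek k i = k i := rfl

/-- The vertex bound for sets of lattice points in a disc of radius `M`; the steps of the four chains
are cut at length `L`. -/
lemma card_extremePoints_le {A : Set E2} (hA : ∀ x ∈ A, ∃ k, ek k = x) {M : ℝ} (hM : 0 ≤ M)
    (hAM : ∀ x ∈ A, ‖x‖ ≤ M) {L : ℕ} (hL : 0 < L) :
    (Nat.card (extremePoints ℝ (convexHull ℝ A)) : ℝ) ≤ 4 * (L ^ 2 + 4 * M / L + 1) := by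
  classical
  have hcoord : ∀ k, ek k ∈ A → ∀ i, |(k i : ℝ)| ≤ M := fun k hk i => by
    have := PiLp.norm_apply_le (ek k) i
    rw [ek_apply, Real.norm_eq_abs] at this
    exact this.trans (hAM _ hk)
  have hKfin : (ek ⁻¹' A).Finite := by
    refine (Set.finite_Icc (fun _ => -⌈M⌉ : Fin 2 → ℤ) (fun _ => ⌈M⌉)).subset fun k hk => ?_
    have h : ∀ i, -⌈M⌉ ≤ k i ∧ k i ≤ ⌈M⌉ := fun i => by
      have h1 := abs_le.1 (hcoord k hk i)
      have h2 := Int.le_ceil M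
      constructor
      · have : ((-⌈M⌉ : ℤ) : ℝ) ≤ k i := by push_cast; linarith
        exact_mod_cast this
      · have : (k i : ℝ) ≤ (⌈M⌉ : ℤ) := by linarith
        exact_mod_cast this
    exact ⟨fun i => (h i).1, fun i => (h i).2⟩
  have hAfin : A.Finite := (hKfin.image ek).subset fun x hx => by
    obtain ⟨k, rfl⟩ := hA x hx
    exact ⟨k, hx, rfl⟩
  have hsub : extremePoints ℝ (convexHull ℝ A) ⊆ A := extremePoints_convexHull_subset
  let S : Finset (Fin 2 → ℤ) :=
    hKfin.toFinset.filter (fun k => ek k ∈ extremePoints ℝ (convexHull ℝ A))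
  have hS : ∀ k, k ∈ S ↔ ek k ∈ extremePoints ℝ (convexHull ℝ A) := fun k => by
    simp only [S, Finset.mem_filter, Set.Finite.mem_toFinset, Set.mem_preimage]
    exact ⟨fun h => h.2, fun h => ⟨hsub h, h⟩⟩
  have himg : extremePoints ℝ (convexHull ℝ A) = (S.image ek : Finset E2) := by
    ext x
    simp only [Finset.coe_image, Set.mem_image, Finset.mem_coe, hS]
    constructor
    · intro hx
      obtain ⟨k, rfl⟩ := hA x (hsub hx)
      exact ⟨k, hx, rfl⟩
    · rintro ⟨k, hk, rfl⟩
      exact hk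
  have hcard : Nat.card (extremePoints ℝ (convexHull ℝ A)) = S.card := by
    rw [Nat.card_coe_set_eq, himg, Set.ncard_coe_finset, Finset.card_image_of_injective _ ek_injective]
  rw [hcard]
  refine exposed_count S (fun k => k 0) (fun k => k 1) L hL M hM
    (fun k hk => hcoord k (hsub ((hS k).1 hk)) 0) (fun k hk => hcoord k (hsub ((hS k).1 hk)) 1) ?_
  intro k hk
  obtain ⟨a, b, h⟩ := exposing_functional hAfin ((hS k).1 hk)
  exact ⟨a, b, fun l hl hne => h (ek l) (hsub ((hS l).1 hl)) (ek_injective.ne hne)⟩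

/-- for a bounded open convex planar domain `Ω` with inscribed and
circumscribed radii `r₁ < 1 < r₂` about the origin, the convex hull of the set of lattice
points `𝔸 = {ℓ ∈ ℤ² : r − 1/h ≤ ρ*(ℓ) < r + 1/h}` has at most `C r^{2/3}` extreme points,
with `C` depending only on `r₁` and `r₂`. -/
theorem statement15 (r₁ r₂ : ℝ) (hr₁ : 0 < r₁) (h1 : r₁ < 1) (h2 : 1 < r₂) :
    ∃ C : ℝ, ∀ Ω : Set E2, Convex ℝ Ω → IsOpen Ω → Bornology.IsBounded Ω →
      Metric.ball 0 r₁ ⊆ Ω → Ω ⊆ Metric.closedBall 0 r₂ →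
      ∀ r h : ℝ, 10 ≤ r → 1 ≤ h →
        (Nat.card (Set.extremePoints ℝ (convexHull ℝ
            {x : E2 | (∃ k : Fin 2 → ℤ, ek k = x) ∧
              r - 1 / h ≤ suppFn Ω x ∧ suppFn Ω x < r + 1 / h})) : ℝ) ≤
          C * r ^ ((2 : ℝ) / 3) := by
  refine ⟨20 + 64 / r₁, ?_⟩
  intro Ω _ _ _ hin hout r h hr hh
  have hr0 : 0 < r := by linarith
  -- `t = r ^ (1/3)`, and steps are cut at length `⌈t⌉`.
  obtain ⟨t, ht1, ht3, ht2⟩ : ∃ t : ℝ, 1 ≤ t ∧ t ^ 3 = r ∧ r ^ ((2 : ℝ) / 3) = t ^ 2 := by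
    refine ⟨r ^ ((1 : ℝ) / 3), Real.one_le_rpow (by linarith) (by norm_num), ?_, ?_⟩
    · rw [← Real.rpow_natCast, ← Real.rpow_mul hr0.le]; norm_num
    · rw [← Real.rpow_natCast, ← Real.rpow_mul hr0.le]; norm_num
  have ht0 : 0 < t := by linarith
  have hL0 : 0 < ⌈t⌉₊ := Nat.ceil_pos.2 ht0
  have hLt : t ≤ (⌈t⌉₊ : ℝ) := Nat.le_ceil t
  have hL2 : (⌈t⌉₊ : ℝ) ≤ 2 * t := by linarith [Nat.ceil_lt_add_one ht0.le]
  refine (card_extremePoints_le (M := 4 * r / r₁) (fun x hx => hx.1) (by positivity)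
    (fun x hx => ?_) hL0).trans ?_
  · have h1h : 1 / h ≤ 1 := by rw [div_le_one (by linarith)]; exact hh
    have := norm_le_suppFn hr₁ hin hout x
    have := hx.2.2
    rw [le_div_iff₀ hr₁]
    linarith
  · have e1 : (⌈t⌉₊ : ℝ) ^ 2 ≤ 4 * t ^ 2 := by nlinarith
    have e2 : 4 * (4 * r / r₁) / (⌈t⌉₊ : ℝ) ≤ 16 / r₁ * t ^ 2 := by
      rw [div_le_iff₀ (by linarith), ← ht3]
      have : 16 / r₁ * t ^ 2 * t ≤ 16 / r₁ * t ^ 2 * (⌈t⌉₊ : ℝ) := by gcongr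
      calc 4 * (4 * t ^ 3 / r₁) = 16 / r₁ * t ^ 2 * t := by ring
        _ ≤ _ := this
    have e3 : 1 ≤ t ^ 2 := by nlinarith
    rw [ht2]
    have e4 : (20 + 64 / r₁) * t ^ 2 = 4 * (4 * t ^ 2 + 16 / r₁ * t ^ 2 + t ^ 2) := by ring
    linarith

end
end

section
/- Let ρ : ℝ^d → ℝ be any function (in the application, the Minkowski functional of a convex body), let A ⊂ ℝ^d be a finite set, and let ε > 0. Define m_{ρ,ε}(A) = max{card(F) : F ⊆ ρ(A) and |s − t| > ε for all distinct s, t ∈ F}, and σ(A,ε) = Σ_{k∈A} card{j ∈ A : |ρ(j) − ρ(k)| ≤ 2ε}. Then card(A) ≤ √(m_{ρ,ε}(A)) · √(3 σ(A,ε)). -/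
/-!
A separated set `F ⊆ ρ(A)` of maximal cardinality `m` is an `ε`-net of `ρ(A)`: otherwise a point of
`ρ(A)` could be added to it. Assigning to each `a ∈ A` a point `f a ∈ F` with `|ρ a - f a| ≤ ε`
splits `A` into `m` fibres, and two points of one fibre have `ρ`-values within `2ε`. Cauchy–Schwarz
then gives `(card A)² ≤ m · ∑ (card of fibre)² ≤ m σ`, so the inequality holds even without the
factor `3`.
-/

open Set

noncomputable section

/-- the Cauchy–Schwarz counting inequality from the appendix: for any
function `ρ : ℝ^d → ℝ`, any finite set `A ⊂ ℝ^d` and any `ε > 0`, if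
`m = m_{ρ,ε}(A)` is the maximal cardinality of an `ε`-separated subset of `ρ(A)` and
`σ = σ(A,ε) = Σ_{k∈A} card{j ∈ A : |ρ(j) − ρ(k)| ≤ 2ε}`, then
`card A ≤ √m · √(3σ)`. -/
theorem statement17 (d : ℕ) (ρ : EuclideanSpace ℝ (Fin d) → ℝ)
    (A : Finset (EuclideanSpace ℝ (Fin d))) (ε : ℝ) (hε : 0 < ε)
    (m : ℕ) (hm : m = sSup {n : ℕ | ∃ F : Finset ℝ, ↑F ⊆ ρ '' ↑A ∧
      (∀ s ∈ F, ∀ t ∈ F, s ≠ t → ε < |s - t|) ∧ F.card = n})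
    (σ : ℕ) (hσ : σ = ∑ k ∈ A, (A.filter fun j => |ρ j - ρ k| ≤ 2 * ε).card) :
    (A.card : ℝ) ≤ Real.sqrt m * Real.sqrt (3 * σ) := by
  classical
  set S : Set ℕ := {n : ℕ | ∃ F : Finset ℝ, ↑F ⊆ ρ '' ↑A ∧
      (∀ s ∈ F, ∀ t ∈ F, s ≠ t → ε < |s - t|) ∧ F.card = n} with hS
  have hbdd : BddAbove S := by
    refine ⟨(A.image ρ).card, ?_⟩
    rintro n ⟨F, hF, -, rfl⟩
    apply Finset.card_le_card
    intro x hx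
    simpa using hF (Finset.mem_coe.2 hx)
  have hne : S.Nonempty := ⟨0, ∅, by simp⟩
  obtain ⟨F, hFA, hFsep, hFcard⟩ : m ∈ S := hm ▸ Nat.sSup_mem hne hbdd
  have hnet : ∀ a ∈ A, ∃ t ∈ F, |ρ a - t| ≤ ε := by
    intro a ha
    by_contra! hfar
    have hnot : ρ a ∉ F := fun h => by
      have := hfar _ h
      simp only [sub_self, abs_zero] at this
      linarith
    -- adding `ρ a` to `F` would contradict the maximality of `m`
    have hmem : m + 1 ∈ S := by
      refine ⟨insert (ρ a) F, ?_, ?_, by rw [Finset.card_insert_of_notMem hnot, hFcard]⟩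
      · rw [Finset.coe_insert]
        exact Set.insert_subset ⟨a, ha, rfl⟩ hFA
      · intro s hs t ht hst
        rcases Finset.mem_insert.1 hs with rfl | hs <;> rcases Finset.mem_insert.1 ht with rfl | ht
        · exact absurd rfl hst
        · exact hfar t ht
        · rw [abs_sub_comm]
          exact hfar s hs
        · exact hFsep s hs t ht hst
    have := le_csSup hbdd hmem
    omega
  choose! f hfF hfε using hnet
  have hcard : A.card = ∑ t ∈ F, (A.filter fun a => f a = t).card :=
    Finset.card_eq_sum_card_fiberwise hfF
  have hsq : ∑ t ∈ F, (A.filter fun a => f a = t).card ^ 2 ≤ σ := by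
    rw [hσ, ← Finset.sum_fiberwise_of_maps_to hfF]
    apply Finset.sum_le_sum
    intro t _
    rw [sq, ← smul_eq_mul]
    apply Finset.card_nsmul_le_sum
    intro k hk
    apply Finset.card_le_card
    intro j hj
    obtain ⟨hkA, hkt⟩ := Finset.mem_filter.1 hk
    obtain ⟨hjA, hjt⟩ := Finset.mem_filter.1 hj
    refine Finset.mem_filter.2 ⟨hjA, ?_⟩
    have h1 := abs_le.1 (hfε k hkA)
    have h2 := abs_le.1 (hfε j hjA)
    rw [hkt] at h1
    rw [hjt] at h2
    exact abs_le.2 ⟨by linarith, by linarith⟩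
  have hCS : A.card ^ 2 ≤ m * σ := by
    rw [hcard, ← hFcard]
    exact sq_sum_le_card_mul_sum_sq.trans (Nat.mul_le_mul_left _ hsq)
  have hCS' : (A.card : ℝ) ^ 2 ≤ m * σ := by exact_mod_cast hCS
  rw [← Real.sqrt_mul (Nat.cast_nonneg m)]
  apply Real.le_sqrt_of_sq_le
  have : (0 : ℝ) ≤ m * σ := by positivity
  linarith

end
end
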